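/- Let p : I × I → [0,∞) be a kernel that is substochastic (Σ_t p(s,t) ≤ 1 for every s ∈ I) and satisfies hypotheses (H1), (H2), (H3) and (H4). Fix z ∈ I, q ∈ (0,1), C > 0, and let b be a q-perturbation of p on Δ_z. Then for every s ∈ Δ_z: the series defining the Green kernel G_b(s,t) of b (as a kernel on Δ_z) converges absolutely for all t ∈ Δ_z, G_p(e,t) ∈ (0,∞) for all t, and for every end ω of I with ω|_{|z|} = z the function t ↦ G_b(s,t)/G_p(e,t) on Δ_z converges to a finite limit along ω, i.e., there exists L ∈ ℝ such that for every ε > 0 there is k ≥ |z| with |G_b(s,t)/G_p(e,t) − L| < ε for all t ∈ Δ_{ω|k}. (This is the classical content of Proposition 3.4 of the paper.) -/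

import Mathlib

open scoped ENNReal

namespace Paper

/-- Words in the two letters `α, β`: the free monoid on two generators, as `List Bool`.
The head of the list is the leftmost letter. -/
abbrev Word := List Bool

/-- Length of the longest common prefix of two lists. -/
def lcpLen : List Bool → List Bool → ℕ
  | a :: s, b :: t => if a = b then lcpLen s t + 1 else 0
  | _, _ => 0

/-- Length of the longest common suffix of two words. -/
def lcsLen (s t : Word) : ℕ := lcpLen s.reverse t.reverse

/-- The tree metric on `Word`: `d(s,t) = (|s| - k) + (|t| - k)`, `k` the length of the
longest common suffix. -/
def treeDist (s t : Word) : ℕ := (s.length - lcsLen s t) + (t.length - lcsLen s t)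

/-- The branch `Δ_x = {u x : u ∈ I}` of words having `x` as a suffix. -/
def Delta (x : Word) : Set Word := {s | x <:+ s}

/-- The geodesic segment `[s,t] = {v : d(s,v) + d(v,t) = d(s,t)}`. -/
def geodesic (s t : Word) : Set Word := {v | treeDist s v + treeDist v t = treeDist s t}

/-- Paths of `n` steps from `s` to `t` staying in `Ω`. -/
def pathSet {X : Type*} (Ω : Set X) (n : ℕ) (s t : X) : Set (Fin (n + 1) → X) :=
  {σ | σ 0 = s ∧ σ (Fin.last n) = t ∧ ∀ i, σ i ∈ Ω}

/-- The weight `∏ a(s_i, s_{i+1})` of a path, as an extended nonnegative real. -/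
noncomputable def weightE {X : Type*} (a : X → X → ℝ) (n : ℕ) (σ : Fin (n + 1) → X) : ℝ≥0∞ :=
  ∏ i : Fin n, ENNReal.ofReal (a (σ i.castSucc) (σ i.succ))

/-- The `n`-step kernel `a⁽ⁿ⁾(s,t)` of the kernel `a` on `Ω`, with values in `[0,∞]`. -/
noncomputable def nStepE {X : Type*} (Ω : Set X) (a : X → X → ℝ) (n : ℕ) (s t : X) : ℝ≥0∞ :=
  ∑' σ : pathSet Ω n s t, weightE a n σ.1

/-- The Green kernel `G_a(s,t) = Σ_n a⁽ⁿ⁾(s,t)` of `a` on `Ω`, with values in `[0,∞]`. -/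
noncomputable def greenE {X : Type*} (Ω : Set X) (a : X → X → ℝ) (s t : X) : ℝ≥0∞ :=
  ∑' n : ℕ, nStepE Ω a n s t

/-- The weight of a path, real version (for signed kernels). -/
noncomputable def weightR {X : Type*} (a : X → X → ℝ) (n : ℕ) (σ : Fin (n + 1) → X) : ℝ :=
  ∏ i : Fin n, a (σ i.castSucc) (σ i.succ)

/-- The `n`-step kernel of a signed kernel `a` on `Ω`. -/
noncomputable def nStepR {X : Type*} (Ω : Set X) (a : X → X → ℝ) (n : ℕ) (s t : X) : ℝ :=
  ∑' σ : pathSet Ω n s t, weightR a n σ.1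

/-- The Green kernel of a signed kernel `a` on `Ω`, as a real number. -/
noncomputable def greenR {X : Type*} (Ω : Set X) (a : X → X → ℝ) (s t : X) : ℝ :=
  ∑' n : ℕ, nStepR Ω a n s t

/-- The Green kernel of `|a|`: finiteness of this expresses absolute convergence of the
series defining the Green kernel of `a`. -/
noncomputable def greenAbs {X : Type*} (Ω : Set X) (a : X → X → ℝ) (s t : X) : ℝ≥0∞ :=
  greenE Ω (fun u v => |a u v|) s t

/-- (H1): finite range `S`. -/
def H1 (p : Word → Word → ℝ) (S : ℕ) : Prop := ∀ s t, S < treeDist s t → p s t = 0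

/-- (H2): nonzero transition probabilities are bounded below by `δ₀`. -/
def H2 (p : Word → Word → ℝ) (δ₀ : ℝ) : Prop := ∀ s t, 0 < p s t → δ₀ ≤ p s t

/-- (H3): uniform irreducibility. -/
def H3 (p : Word → Word → ℝ) (δ₀ : ℝ) (K : ℕ) : Prop :=
  ∀ s t, treeDist s t = 1 → ∃ k ≤ K, ∃ u : ℕ → Word, u 0 = s ∧ u k = t ∧
    ∀ i < k, ∀ x : Word, δ₀ ≤ p (u i ++ x) (u (i + 1) ++ x)

/-- The operator `(Pf)(s) = Σ_t p(s,t) f(t)` extends to a bounded operator of norm at most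
`lam` on `ℓ²(X, m)`, expressed via the associated bilinear form on finitely supported
functions. -/
def opNormBound {X : Type*} (m : X → ℝ) (p : X → X → ℝ) (lam : ℝ) : Prop :=
  ∀ f g : X → ℝ, (Function.support f).Finite → (Function.support g).Finite →
    |∑' s, m s * g s * ∑' t, p s t * f t| ≤
      lam * Real.sqrt (∑' x, m x * f x ^ 2) * Real.sqrt (∑' x, m x * g x ^ 2)

/-- (H4): there is a weight `m` for which `P` is bounded of norm at most `lam` on `ℓ²(I,m)`. -/
def H4 (p : Word → Word → ℝ) (m : Word → ℝ) (lam : ℝ) : Prop :=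
  (∀ x, 0 < m x) ∧ opNormBound m p lam

/-- Substochasticity: `Σ_t p(s,t) ≤ 1` for every `s`. -/
def Substochastic (p : Word → Word → ℝ) : Prop :=
  ∀ s, (∑' t, ENNReal.ofReal (p s t)) ≤ 1

/-- `b` is a `q`-perturbation of `p` on `Δ_z` (with constant `C`). -/
def Perturb (p b : Word → Word → ℝ) (z : Word) (q C : ℝ) : Prop :=
  ∀ s t, s ∈ Delta z → t ∈ Delta z →
    |b s t| ≤ p s t ∧ |b s t - p s t| ≤ C * q ^ s.length

/-- The word `ω|k = ω(k-1) ω(k-2) ⋯ ω(0)` of length `k` determined by an end `ω`. -/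
def endWord (ω : ℕ → Bool) (k : ℕ) : Word := (List.range k).reverse.map ω

/-- The last-entrance kernel `M_p(s,u)`: sum over paths from `s` to `u` of length at least
one whose second-to-last point lies outside `Δ_x`. -/
noncomputable def lastEnter (p : Word → Word → ℝ) (x s u : Word) : ℝ≥0∞ :=
  ∑' m : ℕ, ∑' σ : {σ : Fin (m + 2) → Word //
      σ ∈ pathSet Set.univ (m + 1) s u ∧ σ ((Fin.last m).castSucc) ∉ Delta x},
    weightE p (m + 1) σ.1

/-- The quantum integer `[n]_q = (q⁻ⁿ - qⁿ)/(q⁻¹ - q)`. -/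
noncomputable def qInt (q : ℝ) (n : ℕ) : ℝ := (q ^ (-(n : ℤ)) - q ^ (n : ℤ)) / (q⁻¹ - q)

/-- The lengths of the blocks in the canonical factorization of a word into maximal
alternating subwords. -/
def blockLens : Word → List ℕ
  | [] => []
  | [_] => [1]
  | a :: b :: rest =>
    match blockLens (b :: rest) with
    | [] => [1]
    | k :: ks => if a = b then 1 :: (k :: ks) else (k + 1) :: ks

/-- The quantum dimension `dim_q(x) = Π_i [|x_i| + 1]_q` over the blocks of `x`. -/
noncomputable def dimq (q : ℝ) (x : Word) : ℝ := ((blockLens x).map fun L => qInt q (L + 1)).prod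

/-- The classical dimension `dim(x) = Π_i (|x_i| + 1)` over the blocks of `x`. -/
noncomputable def dimn (x : Word) : ℝ := ((blockLens x).map fun L => (L + 1 : ℝ)).prod

/-- The involution `x ↦ x̄`: reverse the word and exchange the two letters. -/
def bar (x : Word) : Word := (x.map fun a => !a).reverse

/-- The fusion multiplicity `mᵗ_{r,s}`: the number of words `z` such that `r = r₀ z`,
`s = z̄ s₀`, `t = r₀ s₀` for some `r₀, s₀`. -/
noncomputable def fuse (r s t : Word) : ℕ :=
  {z : Word | ∃ r₀ s₀ : Word, r = r₀ ++ z ∧ s = bar z ++ s₀ ∧ t = r₀ ++ s₀}.ncard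

/-- A finitely supported probability measure on `Word`. -/
def IsProbMeasure (μ : Word → ℝ) : Prop :=
  (∀ x, 0 ≤ μ x) ∧ (Function.support μ).Finite ∧ ∑' x, μ x = 1

/-- The transition kernel `p_μ(s,t) = Σ_r μ(r) mᵗ_{r,s} dim_q(t)/(dim_q(r) dim_q(s))`. -/
noncomputable def pMu (q : ℝ) (μ : Word → ℝ) (s t : Word) : ℝ :=
  ∑' r, μ r * (fuse r s t : ℝ) * dimq q t / (dimq q r * dimq q s)

/-- The `q`-binomial coefficient. -/
noncomputable def qbinom (q : ℝ) (n k : ℕ) : ℝ :=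
  q ^ (-((k * (n - k) : ℕ) : ℤ)) *
    ∏ i ∈ Finset.range k, (1 - q ^ (2 * (n - i))) / (1 - q ^ (2 * (k - i)))

/-!
The kernel `p` satisfies a Harnack inequality along the edges of the tree, by (H3), and (H4) makes
`∑ u, G_p(s, u) G_p(u, t)` finite, uniformly on the diagonal. A walk of finite range entering the
branch `Δ_w` must pass within bounded distance of `w`, so `G_p(x, t)` is comparable to
`G_p(x, w) G_p(w, t)` for `t` in `Δ_w` and `x` outside. Consequently the oscillation of
`x ↦ G_p(x, t) / G_p(x, t')` outside `Δ_w` contracts geometrically as `w` moves down towards the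
root, and the Martin kernel `G_p(s, t) / G_p(e, t)` converges along every end.

For the perturbation, the resolvent identity `G_b = G_p + G_b (b - p) G_p` writes `G_b(s, t)` as
`G_p(s, t)` plus a series over `u` whose terms are at most a multiple of
`q ^ |u| G_p(s, u) G_p(u, t)`. Divided by `G_p(e, t)`, the tail `|u| ≥ n` of this series is
`O(q ^ (n / 2))` uniformly in `t`, while each single term is a finite combination of Martin kernels.
-/

section Paths

variable {X : Type*} {s t x : X} {a p : X → X → ℝ}

/-- The decomposition of a path of `n + 1` steps into its first `n` steps and the last one. -/
def pathSnocEquiv (n : ℕ) (s t : X) :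
    pathSet Set.univ (n + 1) s t ≃ (y : X) × pathSet Set.univ n s y where
  toFun σ := ⟨σ.1 (Fin.last n).castSucc, Fin.init σ.1, σ.2.1, rfl, fun _ => trivial⟩
  invFun τ := ⟨Fin.snoc τ.2.1 t,
    (Fin.snoc_castSucc (α := fun _ => X) t τ.2.1 0).trans τ.2.2.1, Fin.snoc_last _ _,
    fun _ => trivial⟩
  left_inv σ := by
    obtain ⟨σ, h0, rfl, h⟩ := σ
    exact Subtype.ext (Fin.snoc_init_self σ)
  right_inv τ := by
    obtain ⟨y, τ, h0, rfl, h⟩ := τ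
    exact Sigma.subtype_ext (Fin.snoc_castSucc (α := fun _ => X) t τ _)
      (Fin.init_snoc (α := fun _ => X) t τ)

lemma weightE_succ (a : X → X → ℝ) (n : ℕ) (σ : Fin (n + 2) → X) :
    weightE a (n + 1) σ = weightE a n (Fin.init σ) *
      ENNReal.ofReal (a (σ (Fin.last n).castSucc) (σ (Fin.last (n + 1)))) :=
  Fin.prod_univ_castSucc _

lemma weightR_succ (a : X → X → ℝ) (n : ℕ) (σ : Fin (n + 2) → X) :
    weightR a (n + 1) σ =
      weightR a n (Fin.init σ) * a (σ (Fin.last n).castSucc) (σ (Fin.last (n + 1))) :=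
  Fin.prod_univ_castSucc _

instance : Unique (pathSet Set.univ 0 s s) where
  default := ⟨fun _ => s, rfl, rfl, fun _ => trivial⟩
  uniq σ := Subtype.ext <| funext fun i => (congrArg σ.1 (Fin.fin_one_eq_zero i)).trans σ.2.1

lemma isEmpty_pathSet_zero (h : s ≠ t) : IsEmpty (pathSet Set.univ 0 s t) :=
  ⟨fun σ => h (σ.2.1.symm.trans σ.2.2.1)⟩

lemma nStepE_zero_self (a : X → X → ℝ) (s : X) : nStepE Set.univ a 0 s s = 1 := by
  simp [nStepE, weightE]

lemma nStepE_zero_of_ne (a : X → X → ℝ) (h : s ≠ t) : nStepE Set.univ a 0 s t = 0 := by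
  have := isEmpty_pathSet_zero h
  exact tsum_empty

lemma nStepR_zero_self (a : X → X → ℝ) (s : X) : nStepR Set.univ a 0 s s = 1 := by
  simp [nStepR, weightR]

lemma nStepR_zero_of_ne (a : X → X → ℝ) (h : s ≠ t) : nStepR Set.univ a 0 s t = 0 := by
  have := isEmpty_pathSet_zero h
  exact tsum_empty

lemma nStepE_succ (a : X → X → ℝ) (n : ℕ) (s t : X) :
    nStepE Set.univ a (n + 1) s t =
      ∑' y, nStepE Set.univ a n s y * ENNReal.ofReal (a y t) := by
  simp only [nStepE, ← ENNReal.tsum_mul_right]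
  rw [← ENNReal.tsum_sigma, ← (pathSnocEquiv n s t).tsum_eq]
  refine tsum_congr fun σ => (weightE_succ a n σ.1).trans ?_
  rw [σ.2.2.1]
  rfl

lemma nStepE_add (a : X → X → ℝ) (i j : ℕ) (s t : X) :
    nStepE Set.univ a (i + j) s t =
      ∑' y, nStepE Set.univ a i s y * nStepE Set.univ a j y t := by
  induction j generalizing t with
  | zero =>
    rw [tsum_eq_single t fun y hy => by rw [nStepE_zero_of_ne a hy, mul_zero],
      nStepE_zero_self, mul_one, add_zero]
  | succ j ih =>
    rw [← add_assoc, nStepE_succ]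
    simp only [ih, nStepE_succ, ← ENNReal.tsum_mul_right, ← ENNReal.tsum_mul_left, mul_assoc]
    exact ENNReal.tsum_comm

lemma nStepE_one (a : X → X → ℝ) (s t : X) :
    nStepE Set.univ a 1 s t = ENNReal.ofReal (a s t) := by
  rw [nStepE_succ, tsum_eq_single s fun y hy => by rw [nStepE_zero_of_ne a hy.symm, zero_mul],
    nStepE_zero_self, one_mul]

lemma nStepE_succ_left (a : X → X → ℝ) (n : ℕ) (s t : X) :
    nStepE Set.univ a (n + 1) s t =
      ∑' y, ENNReal.ofReal (a s y) * nStepE Set.univ a n y t := by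
  simp only [add_comm n 1, nStepE_add, nStepE_one]

lemma greenE_eq_zero_step_add (a : X → X → ℝ) (s t : X) :
    greenE Set.univ a s t = nStepE Set.univ a 0 s t +
      ∑' y, ENNReal.ofReal (a s y) * greenE Set.univ a y t := by
  simp only [greenE, ← ENNReal.tsum_mul_left]
  rw [ENNReal.tsum_comm, tsum_eq_zero_add' ENNReal.summable]
  simp only [nStepE_succ_left]

lemma one_le_greenE_self (a : X → X → ℝ) (s : X) : 1 ≤ greenE Set.univ a s s :=
  (nStepE_zero_self a s).symm.le.trans (ENNReal.le_tsum 0)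

lemma tsum_mul_greenE_le (a : X → X → ℝ) (s t : X) :
    ∑' y, ENNReal.ofReal (a s y) * greenE Set.univ a y t ≤ greenE Set.univ a s t :=
  (greenE_eq_zero_step_add a s t).symm ▸ le_add_self

lemma tsum_greenE_mul_greenE (a : X → X → ℝ) (s t : X) :
    ∑' u, greenE Set.univ a s u * greenE Set.univ a u t =
      ∑' (i : ℕ) (j : ℕ), nStepE Set.univ a (i + j) s t := by
  simp only [greenE, ← ENNReal.tsum_mul_right, nStepE_add]
  rw [ENNReal.tsum_comm]
  simp only [← ENNReal.tsum_mul_left]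
  exact tsum_congr fun i => ENNReal.tsum_comm

lemma pathSet_subset_univ (Ω : Set X) (n : ℕ) (s t : X) :
    pathSet Ω n s t ⊆ pathSet Set.univ n s t :=
  fun _ hσ => ⟨hσ.1, hσ.2.1, fun _ => trivial⟩

lemma greenE_mono {Ω : Set X} (h : ∀ u ∈ Ω, ∀ v ∈ Ω, a u v ≤ p u v) (s t : X) :
    greenE Ω a s t ≤ greenE Set.univ p s t := by
  refine ENNReal.tsum_le_tsum fun n => ?_
  calc nStepE Ω a n s t
      ≤ ∑' σ : pathSet Ω n s t, weightE p n σ.1 :=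
        ENNReal.tsum_le_tsum fun σ => Finset.prod_le_prod' fun i _ =>
          ENNReal.ofReal_le_ofReal (h _ (σ.2.2.2 _) _ (σ.2.2.2 _))
    _ ≤ nStepE Set.univ p n s t :=
        ENNReal.tsum_comp_le_tsum_of_injective
          (Set.inclusion_injective (pathSet_subset_univ Ω n s t)) fun σ => weightE p n σ.1

/-- A maximum principle: off `t`, the Green kernel is the least superharmonic function with its
boundary values. -/
lemma mul_greenE_le_of_superharmonic {U : Set X} (ht : t ∉ U) {h : X → ℝ≥0∞} {k : ℝ≥0∞}
    (superharmonic : ∀ x ∈ U, ∑' y, ENNReal.ofReal (a x y) * h y ≤ h x)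
    (boundary : ∀ x ∈ U, ∀ y ∉ U, 0 < a x y → k * greenE Set.univ a y t ≤ h y) (hx : x ∈ U) :
    k * greenE Set.univ a x t ≤ h x := by
  rw [greenE, ← ENNReal.tsum_mul_left]
  refine ENNReal.tsum_le_of_sum_range_le fun N => ?_
  induction N generalizing x with
  | zero => simp
  | succ N ih =>
    calc ∑ n ∈ Finset.range (N + 1), k * nStepE Set.univ a n x t
        = ∑' y, ENNReal.ofReal (a x y) *
            ∑ n ∈ Finset.range N, k * nStepE Set.univ a n y t := by
          rw [Finset.sum_range_succ', nStepE_zero_of_ne a (ne_of_mem_of_not_mem hx ht), mul_zero,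
            add_zero]
          simp only [nStepE_succ_left, Finset.mul_sum, ← ENNReal.tsum_mul_left, mul_left_comm]
          exact (Summable.tsum_finsetSum fun _ _ => ENNReal.summable).symm
      _ ≤ ∑' y, ENNReal.ofReal (a x y) * h y := ENNReal.tsum_le_tsum fun y => ?_
      _ ≤ h x := superharmonic x hx
    rcases le_or_gt (a x y) 0 with hxy | hxy
    · simp [ENNReal.ofReal_of_nonpos hxy]
    by_cases hy : y ∈ U
    · exact mul_le_mul_right (ih hy) _
    · refine mul_le_mul_right (le_trans ?_ (boundary x hx y hy hxy)) _
      rw [greenE, ← Finset.mul_sum]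
      exact mul_le_mul_right (ENNReal.sum_le_tsum _) _

lemma greenE_mul_greenE_le (a : X → X → ℝ) (x w y : X) :
    greenE Set.univ a x w * greenE Set.univ a w y ≤
      greenE Set.univ a w w * greenE Set.univ a x y := by
  by_cases hx : x = w
  · rw [hx]
  rw [mul_comm (greenE _ _ x w)]
  refine mul_greenE_le_of_superharmonic (U := {w}ᶜ) (t := w)
    (h := fun u => greenE Set.univ a w w * greenE Set.univ a u y) (by simp) ?_ ?_ hx
  · intro u _
    simp only [mul_left_comm (ENNReal.ofReal _), ENNReal.tsum_mul_left]
    exact mul_le_mul_right (tsum_mul_greenE_le a u y) _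
  · intro u _ v hv _
    obtain rfl : v = w := by simpa using hv
    rw [mul_comm]

end Paths

section SpectralBound

variable {X : Type*} {p : X → X → ℝ} {m : X → ℝ} {lam : ℝ}

lemma opNormBound.sqrt_tsum_sq_le (hm : ∀ x, 0 < m x) (hp : opNormBound m p lam) (hlam : 0 ≤ lam)
    {f : X → ℝ} (hf : f.support.Finite)
    (hpf : (Function.support fun s => ∑' t, p s t * f t).Finite) :
    √(∑' s, m s * (∑' t, p s t * f t) ^ 2) ≤ lam * √(∑' x, m x * f x ^ 2) := by
  set A := ∑' s, m s * (∑' t, p s t * f t) ^ 2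
  have hA : 0 ≤ A := tsum_nonneg fun s => mul_nonneg (hm s).le (sq_nonneg _)
  rcases (Real.sqrt_nonneg A).eq_or_lt with hA0 | hA0
  · rw [← hA0]
    positivity
  refine le_of_mul_le_mul_right ?_ hA0
  calc √A * √A = |∑' s, m s * (∑' t, p s t * f t) * ∑' t, p s t * f t| := by
        simp only [mul_assoc, ← sq]
        rw [abs_of_nonneg hA, Real.sq_sqrt hA]
    _ ≤ lam * √(∑' x, m x * f x ^ 2) * √A := hp f _ hf hpf

variable (column_finite : ∀ y, {x | p x y ≠ 0}.Finite)
include column_finite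

lemma finite_support_nStepE (n : ℕ) (t : X) :
    (Function.support fun s => nStepE Set.univ p n s t).Finite := by
  induction n with
  | zero =>
    refine (Set.finite_singleton t).subset fun s hs => ?_
    by_contra h
    exact hs (nStepE_zero_of_ne p h)
  | succ n ih =>
    refine (ih.biUnion fun y _ => column_finite y).subset fun s hs => ?_
    rw [Function.mem_support, nStepE_succ_left, Ne, ENNReal.tsum_eq_zero] at hs
    push Not at hs
    obtain ⟨y, hy⟩ := hs
    refine Set.mem_biUnion (x := y) (right_ne_zero_of_mul hy) fun h => hy ?_
    rw [h, ENNReal.ofReal_zero, zero_mul]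

lemma nStepE_ne_top (n : ℕ) (s t : X) : nStepE Set.univ p n s t ≠ ⊤ := by
  induction n generalizing s with
  | zero =>
    by_cases h : s = t
    · simp [h, nStepE_zero_self]
    · simp [nStepE_zero_of_ne p h]
  | succ n ih =>
    have hfin := finite_support_nStepE column_finite n t
    rw [nStepE_succ_left, tsum_eq_sum (s := hfin.toFinset) fun y hy => by
      rw [Function.notMem_support.1 fun h => hy (hfin.mem_toFinset.2 h), mul_zero]]
    exact ENNReal.sum_ne_top.2 fun y _ => ENNReal.mul_ne_top ENNReal.ofReal_ne_top (ih y)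

variable (hp : ∀ x y, 0 ≤ p x y) (hm : ∀ x, 0 < m x) (hlam : 0 ≤ lam)
  (hnorm : opNormBound m p lam)
include hp hm hlam hnorm

lemma sqrt_tsum_nStepE_sq_le (n : ℕ) (t : X) :
    √(∑' x, m x * (nStepE Set.univ p n x t).toReal ^ 2) ≤ lam ^ n * √(m t) := by
  have hsupp (n : ℕ) : (Function.support fun x => (nStepE Set.univ p n x t).toReal).Finite :=
    (finite_support_nStepE column_finite n t).subset fun x hx h => hx (by simp [h])
  induction n with
  | zero =>
    rw [tsum_eq_single t fun x hx => by simp [nStepE_zero_of_ne p hx]]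
    simp [nStepE_zero_self]
  | succ n ih =>
    have hstep (s : X) : (nStepE Set.univ p (n + 1) s t).toReal =
        ∑' y, p s y * (nStepE Set.univ p n y t).toReal := by
      rw [nStepE_succ_left, ENNReal.tsum_toReal_eq fun y =>
        ENNReal.mul_ne_top ENNReal.ofReal_ne_top (nStepE_ne_top column_finite n y t)]
      simp only [ENNReal.toReal_mul, ENNReal.toReal_ofReal (hp s _)]
    have hle := hnorm.sqrt_tsum_sq_le hm hlam (hsupp n) (by simpa only [hstep] using hsupp (n + 1))
    rw [pow_succ', mul_assoc]
    simp only [hstep]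
    exact hle.trans (mul_le_mul_of_nonneg_left ih hlam)

lemma nStepE_le (n : ℕ) (s t : X) :
    nStepE Set.univ p n s t ≤ ENNReal.ofReal √(m t / m s) * ENNReal.ofReal lam ^ n := by
  set f : X → ℝ := fun x => (nStepE Set.univ p n x t).toReal
  have hfin : (Function.support fun x => m x * f x ^ 2).Finite :=
    (finite_support_nStepE column_finite n t).subset fun x hx h => hx (by simp [f, h])
  have hs : √(m s) * f s ≤ lam ^ n * √(m t) := by
    rw [← Real.sqrt_sq (show 0 ≤ f s from ENNReal.toReal_nonneg), ← Real.sqrt_mul (hm s).le]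
    refine (Real.sqrt_le_sqrt ?_).trans
      (sqrt_tsum_nStepE_sq_le column_finite hp hm hlam hnorm n t)
    exact (summable_of_hasFiniteSupport hfin).le_tsum s fun x _ =>
      mul_nonneg (hm x).le (sq_nonneg _)
  rw [← ENNReal.ofReal_pow hlam, ← ENNReal.ofReal_mul (Real.sqrt_nonneg _),
    ENNReal.le_ofReal_iff_toReal_le (nStepE_ne_top column_finite n s t) (by positivity),
    Real.sqrt_div' _ (hm s).le, div_mul_eq_mul_div, le_div_iff₀ (Real.sqrt_pos.2 (hm s))]
  linarith

lemma tsum_greenE_mul_greenE_le (s t : X) :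
    ∑' u, greenE Set.univ p s u * greenE Set.univ p u t ≤
      ENNReal.ofReal √(m t / m s) * (1 - ENNReal.ofReal lam)⁻¹ ^ 2 := by
  rw [tsum_greenE_mul_greenE]
  calc ∑' (i : ℕ) (j : ℕ), nStepE Set.univ p (i + j) s t
      ≤ ∑' (i : ℕ) (j : ℕ), ENNReal.ofReal √(m t / m s) *
          (ENNReal.ofReal lam ^ i * ENNReal.ofReal lam ^ j) :=
        ENNReal.tsum_le_tsum fun i => ENNReal.tsum_le_tsum fun j =>
          pow_add (ENNReal.ofReal lam) i j ▸ nStepE_le column_finite hp hm hlam hnorm (i + j) s t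
    _ = ENNReal.ofReal √(m t / m s) * (1 - ENNReal.ofReal lam)⁻¹ ^ 2 := by
        simp only [ENNReal.tsum_mul_left, ENNReal.tsum_mul_right, ENNReal.tsum_geometric, sq]

end SpectralBound

section SignedKernels

/-- The Green kernel of a nonnegative kernel as a real number, with the junk value `0` where
`greenE` is infinite. -/
noncomputable def green {X : Type*} (p : X → X → ℝ) (s t : X) : ℝ :=
  (greenE Set.univ p s t).toReal

/-- The extension by zero of a kernel on `Ω`. -/
noncomputable def zeroExtend {X : Type*} (Ω : Set X) (a : X → X → ℝ) (u v : X) : ℝ :=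
  Ω.indicator (fun u => Ω.indicator (a u) v) u

variable {X : Type*} {a p : X → X → ℝ} {Ω : Set X} {s t : X}

lemma nStepR_eq_nStepR_zeroExtend (a : X → X → ℝ) (hs : s ∈ Ω) (n : ℕ) (t : X) :
    nStepR Ω a n s t = nStepR Set.univ (zeroExtend Ω a) n s t := by
  have hsub := pathSet_subset_univ Ω n s t
  have hsupp : (Function.support fun σ : pathSet Set.univ n s t =>
      weightR (zeroExtend Ω a) n σ.1) ⊆ Set.range (Set.inclusion hsub) := by
    intro σ hσ
    refine ⟨⟨σ.1, σ.2.1, σ.2.2.1, Fin.cases (σ.2.1.symm ▸ hs) fun i => ?_⟩, rfl⟩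
    by_contra hi
    refine hσ (Finset.prod_eq_zero (Finset.mem_univ i) ?_)
    simp [zeroExtend, hi]
  rw [nStepR, nStepR, ← (Set.inclusion_injective hsub).tsum_eq hsupp]
  refine tsum_congr fun σ => Finset.prod_congr rfl fun i _ => ?_
  simp [zeroExtend, σ.2.2.2 i.castSucc, σ.2.2.2 i.succ]

lemma greenR_eq_greenR_zeroExtend (a : X → X → ℝ) (hs : s ∈ Ω) (t : X) :
    greenR Ω a s t = greenR Set.univ (zeroExtend Ω a) s t :=
  tsum_congr fun n => nStepR_eq_nStepR_zeroExtend a hs n t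

lemma summable_uncurry_of_enorm {Y : Type*} {f : X → Y → ℝ} (h : ∑' x, ∑' y, ‖f x y‖ₑ ≠ ⊤) :
    Summable (Function.uncurry f) :=
  .of_enorm (ENNReal.tsum_prod (f := fun x y => ‖f x y‖ₑ) ▸ h)

section Dominated

variable (hap : ∀ u v, |a u v| ≤ p u v)
include hap

lemma enorm_apply_le (u v : X) : ‖a u v‖ₑ ≤ ENNReal.ofReal (p u v) := by
  rw [Real.enorm_eq_ofReal_abs]
  exact ENNReal.ofReal_le_ofReal (hap u v)

lemma enorm_weightR_le (n : ℕ) (σ : Fin (n + 1) → X) : ‖weightR a n σ‖ₑ ≤ weightE p n σ := by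
  induction n with
  | zero => simp [weightR, weightE]
  | succ n ih =>
    rw [weightR_succ, weightE_succ, enorm_mul]
    exact mul_le_mul' (ih _) (enorm_apply_le hap _ _)

lemma enorm_nStepR_le (n : ℕ) (s t : X) :
    ‖nStepR Set.univ a n s t‖ₑ ≤ nStepE Set.univ p n s t :=
  enorm_tsum_le_tsum_enorm.trans (ENNReal.tsum_le_tsum fun σ => enorm_weightR_le hap n σ.1)

lemma enorm_greenR_le (s t : X) : ‖greenR Set.univ a s t‖ₑ ≤ greenE Set.univ p s t :=
  enorm_tsum_le_tsum_enorm.trans (ENNReal.tsum_le_tsum fun n => enorm_nStepR_le hap n s t)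

lemma nStepR_succ {n : ℕ} (hfin : nStepE Set.univ p (n + 1) s t ≠ ⊤) :
    nStepR Set.univ a (n + 1) s t = ∑' y, nStepR Set.univ a n s y * a y t := by
  let lastStepWeight (τ : (y : X) × pathSet Set.univ n s y) : ℝ := weightR a n τ.2.1 * a τ.1 t
  have hweight (σ : pathSet Set.univ (n + 1) s t) :
      weightR a (n + 1) σ.1 = lastStepWeight (pathSnocEquiv n s t σ) := by
    rw [weightR_succ, σ.2.2.1]
    rfl
  have hsum : Summable fun σ : pathSet Set.univ (n + 1) s t => weightR a (n + 1) σ.1 :=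
    .of_enorm <| ne_top_of_le_ne_top hfin <|
      ENNReal.tsum_le_tsum fun σ => enorm_weightR_le hap (n + 1) σ.1
  rw [nStepR, tsum_congr hweight, (pathSnocEquiv n s t).tsum_eq lastStepWeight,
    ((pathSnocEquiv n s t).summable_iff (f := lastStepWeight).1
      (hsum.congr fun σ => hweight σ)).tsum_sigma]
  simp only [lastStepWeight, nStepR, tsum_mul_right]

lemma greenR_eq_zero_step_add (hfin : greenE Set.univ p s t ≠ ⊤) :
    greenR Set.univ a s t = nStepR Set.univ a 0 s t + ∑' y, greenR Set.univ a s y * a y t := by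
  have hsum : Summable fun n => nStepR Set.univ a n s t :=
    .of_enorm <| ne_top_of_le_ne_top hfin <|
      ENNReal.tsum_le_tsum fun n => enorm_nStepR_le hap n s t
  have hsum₂ : Summable (Function.uncurry fun n y => nStepR Set.univ a n s y * a y t) := by
    refine summable_uncurry_of_enorm (ne_top_of_le_ne_top hfin ?_)
    rw [greenE, tsum_eq_zero_add' (f := fun n => nStepE _ _ n _ _) ENNReal.summable]
    refine le_add_left (ENNReal.tsum_le_tsum fun n => ?_)
    rw [nStepE_succ]
    simp only [enorm_mul]
    exact ENNReal.tsum_le_tsum fun y =>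
      mul_le_mul' (enorm_nStepR_le hap n s y) (enorm_apply_le hap y t)
  have hstep (n : ℕ) :
      nStepR Set.univ a (n + 1) s t = ∑' y, nStepR Set.univ a n s y * a y t :=
    nStepR_succ hap (ENNReal.ne_top_of_tsum_ne_top hfin (n + 1))
  rw [greenR, hsum.tsum_eq_zero_add]
  simp only [hstep, greenR, ← tsum_mul_right]
  rw [← hsum₂.tsum_comm]

end Dominated

section Green

lemma green_nonneg (p : X → X → ℝ) (s t : X) : 0 ≤ green p s t := ENNReal.toReal_nonneg

lemma ofReal_green (hfin : greenE Set.univ p s t ≠ ⊤) :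
    ENNReal.ofReal (green p s t) = greenE Set.univ p s t :=
  ENNReal.ofReal_toReal hfin

lemma tsum_mul_greenE_ne_top (hfin : greenE Set.univ p s t ≠ ⊤) :
    ∑' y, ENNReal.ofReal (p s y) * greenE Set.univ p y t ≠ ⊤ :=
  ne_top_of_le_ne_top hfin (tsum_mul_greenE_le p s t)

variable (hp : ∀ u v, 0 ≤ p u v)
include hp

lemma toReal_ofReal_mul_greenE (s y t : X) :
    (ENNReal.ofReal (p s y) * greenE Set.univ p y t).toReal = p s y * green p y t := by
  rw [ENNReal.toReal_mul, ENNReal.toReal_ofReal (hp s y), green]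

lemma summable_mul_green (hfin : greenE Set.univ p s t ≠ ⊤) :
    Summable fun y => p s y * green p y t := by
  simpa only [toReal_ofReal_mul_greenE hp] using
    ENNReal.summable_toReal (tsum_mul_greenE_ne_top hfin)

lemma green_eq_zero_step_add (hfin : greenE Set.univ p s t ≠ ⊤) :
    green p s t = (nStepE Set.univ p 0 s t).toReal + ∑' y, p s y * green p y t := by
  have hsum := tsum_mul_greenE_ne_top hfin
  rw [green, greenE_eq_zero_step_add,
    ENNReal.toReal_add (ENNReal.ne_top_of_tsum_ne_top hfin 0) hsum,
    ENNReal.tsum_toReal_eq (ENNReal.ne_top_of_tsum_ne_top hsum)]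
  simp only [toReal_ofReal_mul_greenE hp]

lemma green_eq_tsum (hfin : greenE Set.univ p s t ≠ ⊤) (h : s ≠ t) :
    green p s t = ∑' y, p s y * green p y t := by
  rw [green_eq_zero_step_add hp hfin, nStepE_zero_of_ne p h, ENNReal.toReal_zero, zero_add]

end Green

section Resolvent

lemma greenE_ne_top_of_tsum_ne_top
    (hfin : ∑' u, greenE Set.univ p s u * greenE Set.univ p u t ≠ ⊤) :
    greenE Set.univ p s t ≠ ⊤ :=
  ne_top_of_le_ne_top (ENNReal.ne_top_of_tsum_ne_top hfin t)
    (le_mul_of_one_le_right' (one_le_greenE_self p t))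

variable (hfin : ∀ s t, ∑' u, greenE Set.univ p s u * greenE Set.univ p u t ≠ ⊤)
include hfin

lemma summable_mul_of_enorm_le_greenE {f g : X → ℝ} (hf : ∀ u, ‖f u‖ₑ ≤ greenE Set.univ p s u)
    (hg : ∀ u, ‖g u‖ₑ ≤ greenE Set.univ p u t) : Summable fun u => f u * g u := by
  refine .of_enorm (ne_top_of_le_ne_top (hfin s t) (ENNReal.tsum_le_tsum fun u => ?_))
  rw [enorm_mul]
  exact mul_le_mul' (hf u) (hg u)

lemma enorm_green (s t : X) : ‖green p s t‖ₑ = greenE Set.univ p s t := by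
  rw [Real.enorm_of_nonneg (green_nonneg p s t),
    ofReal_green (greenE_ne_top_of_tsum_ne_top (hfin s t))]

lemma tsum_greenR_mul_green_of_first_step (hp : ∀ u v, 0 ≤ p u v)
    (hsum : Summable fun u => greenR Set.univ a s u * green p u t) :
    ∑' u, greenR Set.univ a s u * green p u t =
      greenR Set.univ a s t + ∑' u, greenR Set.univ a s u * ∑' v, p u v * green p v t := by
  have hzero : HasSum (fun u => greenR Set.univ a s u * (nStepE Set.univ p 0 u t).toReal)
      (greenR Set.univ a s t) := by
    simpa [nStepE_zero_self] using hasSum_single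
      (f := fun u => greenR Set.univ a s u * (nStepE Set.univ p 0 u t).toReal) t
      fun u hu => by simp [nStepE_zero_of_ne p hu]
  rw [← sub_eq_iff_eq_add', ← (hsum.hasSum.sub hzero).tsum_eq]
  refine tsum_congr fun u => ?_
  rw [← mul_sub, green_eq_zero_step_add hp (greenE_ne_top_of_tsum_ne_top (hfin u t)),
    add_sub_cancel_left]

lemma enorm_tsum_mul_green_le {f : X → ℝ} {c : ℝ} (hc : 0 ≤ c) {u : X}
    (hf : ∀ v, |f v| ≤ c * p u v) (t : X) :
    ‖∑' v, f v * green p v t‖ₑ ≤ ENNReal.ofReal c * greenE Set.univ p u t :=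
  calc ‖∑' v, f v * green p v t‖ₑ
      ≤ ∑' v, ‖f v * green p v t‖ₑ := enorm_tsum_le_tsum_enorm
    _ ≤ ∑' v, ENNReal.ofReal c * (ENNReal.ofReal (p u v) * greenE Set.univ p v t) := by
      refine ENNReal.tsum_le_tsum fun v => ?_
      rw [enorm_mul, enorm_green hfin, ← mul_assoc, ← ENNReal.ofReal_mul hc,
        Real.enorm_eq_ofReal_abs]
      exact mul_le_mul_left (ENNReal.ofReal_le_ofReal (hf v)) _
    _ ≤ ENNReal.ofReal c * greenE Set.univ p u t := by
      rw [ENNReal.tsum_mul_left]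
      exact mul_le_mul_right (tsum_mul_greenE_le p u t) _

variable (hap : ∀ u v, |a u v| ≤ p u v)
include hap

lemma tsum_greenR_mul_green_of_last_step
    (hsum : Summable fun u => greenR Set.univ a s u * green p u t) :
    ∑' u, greenR Set.univ a s u * green p u t =
      green p s t + ∑' u, greenR Set.univ a s u * ∑' v, a u v * green p v t := by
  have hzero : HasSum (fun u => nStepR Set.univ a 0 s u * green p u t) (green p s t) := by
    simpa [nStepR_zero_self] using hasSum_single
      (f := fun u => nStepR Set.univ a 0 s u * green p u t) s
      fun u hu => by simp [nStepR_zero_of_ne a hu.symm]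
  have hsum₂ : Summable (Function.uncurry fun y u =>
      greenR Set.univ a s y * (a y u * green p u t)) := by
    refine summable_uncurry_of_enorm (ne_top_of_le_ne_top (hfin s t) ?_)
    refine ENNReal.tsum_le_tsum fun y => ?_
    simp only [enorm_mul, ENNReal.tsum_mul_left, enorm_green hfin]
    refine mul_le_mul' (enorm_greenR_le hap s y) ((ENNReal.tsum_le_tsum fun u => ?_).trans
      (tsum_mul_greenE_le p y t))
    exact mul_le_mul_left (enorm_apply_le hap y u) _
  rw [← sub_eq_iff_eq_add', ← (hsum.hasSum.sub hzero).tsum_eq]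
  simp only [← tsum_mul_left]
  rw [← hsum₂.tsum_comm]
  refine tsum_congr fun u => ?_
  rw [← sub_mul, greenR_eq_zero_step_add hap (greenE_ne_top_of_tsum_ne_top (hfin s u)),
    add_sub_cancel_left, ← tsum_mul_right]
  exact tsum_congr fun y => mul_assoc _ _ _

/-- The resolvent identity, obtained by expanding `∑ u, G_a(s, u) G_p(u, t)` with the last-step
recursion of `G_a` and with the first-step recursion of `G_p`. -/
lemma greenR_eq_green_add (s t : X) :
    greenR Set.univ a s t = green p s t +
      ∑' u, greenR Set.univ a s u * ∑' v, (a u v - p u v) * green p v t := by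
  have hp (u v : X) : 0 ≤ p u v := (abs_nonneg _).trans (hap u v)
  have hpp (u v : X) : |p u v| ≤ p u v := (abs_of_nonneg (hp u v)).le
  have hsum {g : X → ℝ} (hg : ∀ u, ‖g u‖ₑ ≤ greenE Set.univ p u t) :
      Summable fun u => greenR Set.univ a s u * g u :=
    summable_mul_of_enorm_le_greenE hfin (enorm_greenR_le hap s) hg
  have hgreen := hsum fun u => (enorm_green hfin u t).le
  have hdiff (u : X) : ∑' v, (a u v - p u v) * green p v t =
      ∑' v, a u v * green p v t - ∑' v, p u v * green p v t := by
    have hp_sum := summable_mul_green hp (greenE_ne_top_of_tsum_ne_top (hfin u t))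
    have ha_sum : Summable fun v => a u v * green p v t :=
      hp_sum.of_norm_bounded fun v => by
        rw [norm_mul, Real.norm_eq_abs, Real.norm_of_nonneg (green_nonneg p v t)]
        exact mul_le_mul_of_nonneg_right (hap u v) (green_nonneg p v t)
    simp only [sub_mul]
    exact ha_sum.tsum_sub hp_sum
  have henorm {f : X → X → ℝ} (hf : ∀ u v, |f u v| ≤ p u v) (u : X) :
      ‖∑' v, f u v * green p v t‖ₑ ≤ greenE Set.univ p u t := by
    simpa using enorm_tsum_mul_green_le hfin zero_le_one (by simpa using hf u) t
  simp only [hdiff, mul_sub]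
  rw [(hsum (henorm hap)).tsum_sub (hsum (henorm hpp))]
  linarith [tsum_greenR_mul_green_of_first_step hfin hp hgreen,
    tsum_greenR_mul_green_of_last_step hfin hap hgreen]

end Resolvent

end SignedKernels

section TreeMetric

lemma lcpLen_comm : ∀ s t : List Bool, lcpLen s t = lcpLen t s
  | [], [] | [], _ :: _ | _ :: _, [] => rfl
  | a :: s, b :: t => by simp only [lcpLen, lcpLen_comm s t, eq_comm]

lemma lcpLen_le_left : ∀ s t : List Bool, lcpLen s t ≤ s.length
  | [], [] | [], _ :: _ | _ :: _, [] => Nat.zero_le _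
  | a :: s, b :: t => by
    have := lcpLen_le_left s t
    simp only [lcpLen, List.length_cons]
    split_ifs <;> omega

lemma take_lcpLen : ∀ s t : List Bool, s.take (lcpLen s t) = t.take (lcpLen s t)
  | [], [] | [], _ :: _ | _ :: _, [] => rfl
  | a :: s, b :: t => by
    simp only [lcpLen]
    split_ifs with h
    · simp only [List.take_succ_cons, h, take_lcpLen s t]
    · rfl

lemma lcsLen_comm (s t : Word) : lcsLen s t = lcsLen t s := lcpLen_comm _ _

lemma lcsLen_le_left (s t : Word) : lcsLen s t ≤ s.length :=
  (lcpLen_le_left _ _).trans_eq s.length_reverse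

lemma suffix_of_length_le_lcsLen {s t w : Word} (hw : w <:+ t) (h : w.length ≤ lcsLen s t) :
    w <:+ s := by
  rw [← List.reverse_prefix] at hw ⊢
  have hprefix : w.reverse <+: s.reverse.take (lcsLen s t) := by
    rw [lcsLen, take_lcpLen, List.prefix_take_iff]
    exact ⟨hw, by simpa [lcsLen] using h⟩
  exact hprefix.trans (List.take_prefix _ _)

lemma treeDist_comm (s t : Word) : treeDist s t = treeDist t s := by
  rw [treeDist, treeDist, lcsLen_comm, add_comm]

lemma length_le_add_treeDist (s t : Word) : t.length ≤ s.length + treeDist s t := by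
  have := lcsLen_le_left s t
  unfold treeDist
  omega

lemma length_le_of_mem_Delta_of_notMem {s t w : Word} (ht : t ∈ Delta w) (hs : s ∉ Delta w) :
    t.length ≤ w.length + treeDist s t := by
  have : lcsLen s t < w.length := by
    by_contra! h
    exact hs (suffix_of_length_le_lcsLen ht h)
  unfold treeDist
  omega

lemma H1.treeDist_le {p : Word → Word → ℝ} {S : ℕ} (h1 : H1 p S) {x y : Word} (h : p x y ≠ 0) :
    treeDist x y ≤ S := by
  by_contra! hlt
  exact h (h1 x y hlt)

lemma H1.finite_column {p : Word → Word → ℝ} {S : ℕ} (h1 : H1 p S) (y : Word) :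
    {x | p x y ≠ 0}.Finite :=
  (List.finite_length_le Bool (y.length + S)).subset fun x hx =>
    (length_le_add_treeDist y x).trans
      (Nat.add_le_add_left (treeDist_comm x y ▸ h1.treeDist_le hx) _)

lemma H1.finite_row {p : Word → Word → ℝ} {S : ℕ} (h1 : H1 p S) (x : Word) :
    {y | p x y ≠ 0}.Finite :=
  (List.finite_length_le Bool (x.length + S)).subset fun y hy =>
    (length_le_add_treeDist x y).trans (Nat.add_le_add_left (h1.treeDist_le hy) _)

end TreeMetric

section Harnack

/-- Nonnegative functions on `V` whose value at a point dominates each single term `p y y' * c y'`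
of their mean there: what remains of superharmonicity after dropping all but one neighbour, and
all that the Harnack inequality needs. -/
structure IsSuperOn {X : Type*} (p : X → X → ℝ) (V : Set X) (c : X → ℝ) : Prop where
  nonneg : ∀ y ∈ V, 0 ≤ c y
  mul_le : ∀ y ∈ V, ∀ y' ∈ V, p y y' * c y' ≤ c y

lemma IsSuperOn.mono {X : Type*} {p : X → X → ℝ} {V V' : Set X} {c : X → ℝ}
    (h : IsSuperOn p V c) (hV : V' ⊆ V) : IsSuperOn p V' c :=
  ⟨fun y hy => h.nonneg y (hV hy), fun y hy y' hy' => h.mul_le y (hV hy) y' (hV hy')⟩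

lemma IsSuperOn.pow_mul_le {X : Type*} {p : X → X → ℝ} {V : Set X} {c : X → ℝ}
    (h : IsSuperOn p V c) {δ : ℝ} (hδ : 0 ≤ δ) {k : ℕ} {u : ℕ → X} (hu : ∀ i ≤ k, u i ∈ V)
    (hstep : ∀ i < k, δ ≤ p (u i) (u (i + 1))) : δ ^ k * c (u k) ≤ c (u 0) := by
  induction k with
  | zero => simp
  | succ k ih =>
    have hk := hu (k + 1) le_rfl
    calc δ ^ (k + 1) * c (u (k + 1)) = δ ^ k * (δ * c (u (k + 1))) := by ring
      _ ≤ δ ^ k * (p (u k) (u (k + 1)) * c (u (k + 1))) := by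
        gcongr
        · exact h.nonneg _ hk
        · exact hstep k k.lt_succ_self
      _ ≤ δ ^ k * c (u k) := by
        gcongr
        exact h.mul_le _ (hu k k.le_succ) _ hk
      _ ≤ c (u 0) := ih (fun i hi => hu i (hi.trans k.le_succ))
        fun i hi => hstep i (hi.trans k.lt_succ_self)

/-- The Harnack inequality with constant `η` along the edge between `x` and `a :: x`, for functions
controlled on a ball around the root reaching `R` levels beyond `x`. -/
def EdgeHarnack (p : Word → Word → ℝ) (R : ℕ) (η : ℝ) : Prop :=
  ∀ (a : Bool) (x : Word) (c : Word → ℝ), IsSuperOn p {y | y.length ≤ x.length + R} c →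
    η * c (a :: x) ≤ c x ∧ η * c x ≤ c (a :: x)

lemma H3.exists_edgeHarnack {p : Word → Word → ℝ} {δ₀ : ℝ} {K : ℕ} (h3 : H3 p δ₀ K)
    (hδ₀ : 0 ≤ δ₀) (hδ₁ : δ₀ ≤ 1) : ∃ R, EdgeHarnack p R (δ₀ ^ K) := by
  have directed {s t : Word} (hst : treeDist s t = 1) : ∃ R, ∀ r ≥ R, ∀ (x : Word) (c : Word → ℝ),
      IsSuperOn p {y | y.length ≤ x.length + r} c → δ₀ ^ K * c (t ++ x) ≤ c (s ++ x) := by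
    obtain ⟨k, hk, u, rfl, rfl, hu⟩ := h3 s t hst
    refine ⟨∑ i ∈ Finset.range (k + 1), (u i).length, fun r hr x c hc => ?_⟩
    have hmem (i : ℕ) (hi : i ≤ k) : u i ++ x ∈ {y : Word | y.length ≤ x.length + r} := by
      have : (u i).length ≤ ∑ i ∈ Finset.range (k + 1), (u i).length :=
        Finset.single_le_sum (f := fun i => (u i).length) (fun _ _ => Nat.zero_le _)
          (Finset.mem_range_succ_iff.2 hi)
      simp only [Set.mem_ofPred_eq, List.length_append]
      omega
    calc δ₀ ^ K * c (u k ++ x) ≤ δ₀ ^ k * c (u k ++ x) :=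
          mul_le_mul_of_nonneg_right (pow_le_pow_of_le_one hδ₀ hδ₁ hk) (hc.nonneg _ (hmem k le_rfl))
      _ ≤ c (u 0 ++ x) := hc.pow_mul_le hδ₀ (u := fun i => u i ++ x) hmem fun i hi => hu i hi x
  choose R₁ hR₁ using fun a : Bool => directed (s := []) (t := [a]) rfl
  choose R₂ hR₂ using fun a : Bool => directed (s := [a]) (t := []) (by cases a <;> rfl)
  refine ⟨∑ a, (R₁ a + R₂ a), fun a x c hc => ?_⟩
  have hle : R₁ a + R₂ a ≤ ∑ a, (R₁ a + R₂ a) :=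
    Finset.single_le_sum (f := fun a => R₁ a + R₂ a) (fun _ _ => Nat.zero_le _) (Finset.mem_univ a)
  exact ⟨hR₁ a _ (by omega) x c hc, hR₂ a _ (by omega) x c hc⟩

lemma EdgeHarnack.pow_length {p : Word → Word → ℝ} {R : ℕ} {η : ℝ} (h : EdgeHarnack p R η)
    (hη : 0 ≤ η) (x u : Word) {c : Word → ℝ}
    (hc : IsSuperOn p {y | y.length ≤ x.length + u.length + R} c) :
    η ^ u.length * c (u ++ x) ≤ c x ∧ η ^ u.length * c x ≤ c (u ++ x) := by
  induction u with
  | nil => simp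
  | cons a u ih =>
    obtain ⟨ih₁, ih₂⟩ := ih <| hc.mono fun y hy => by
      simp only [Set.mem_ofPred_eq, List.length_cons] at hy ⊢
      omega
    obtain ⟨edge₁, edge₂⟩ := h a (u ++ x) c <| hc.mono fun y hy => by
      simp only [Set.mem_ofPred_eq, List.length_cons, List.length_append] at hy ⊢
      omega
    rw [List.length_cons, List.cons_append]
    constructor
    · calc η ^ (u.length + 1) * c (a :: (u ++ x))
          = η ^ u.length * (η * c (a :: (u ++ x))) := by ring
        _ ≤ c x := (mul_le_mul_of_nonneg_left edge₁ (by positivity)).trans ih₁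
    · calc η ^ (u.length + 1) * c x = η * (η ^ u.length * c x) := by ring
        _ ≤ c (a :: (u ++ x)) := (mul_le_mul_of_nonneg_left ih₂ hη).trans edge₂

end Harnack

/-- The standing assumptions on a kernel `p` under which the boundary theory works: finite range
`S`, the Harnack inequality along edges, and, on the Green kernel, finiteness of `G * G` together
with a uniform bound `Λ` on its diagonal. -/
structure UniformWalk (p : Word → Word → ℝ) (S R : ℕ) (η Λ : ℝ) : Prop where
  nonneg : ∀ x y, 0 ≤ p x y
  finite_range : H1 p S
  pos : 0 < η
  le_one : η ≤ 1
  edge_harnack : EdgeHarnack p R η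
  tsum_ne_top : ∀ s t, ∑' u, greenE Set.univ p s u * greenE Set.univ p u t ≠ ⊤
  tsum_self_le : ∀ w, ∑' u, greenE Set.univ p w u * greenE Set.univ p u w ≤ ENNReal.ofReal Λ

lemma exists_uniformWalk {p : Word → Word → ℝ} (hp : ∀ s t, 0 ≤ p s t) {S : ℕ} {δ₀ : ℝ}
    (hδ₀ : δ₀ ∈ Set.Ioo (0 : ℝ) 1) {K : ℕ} {m : Word → ℝ} {lam : ℝ}
    (hlam : lam ∈ Set.Ioo (0 : ℝ) 1) (h1 : H1 p S) (h3 : H3 p δ₀ K) (h4 : H4 p m lam) :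
    ∃ R η Λ, UniformWalk p S R η Λ := by
  obtain ⟨R, hR⟩ := h3.exists_edgeHarnack hδ₀.1.le hδ₀.2.le
  have hsq := tsum_greenE_mul_greenE_le h1.finite_column hp h4.1 hlam.1.le h4.2
  have hgeom : (1 - ENNReal.ofReal lam)⁻¹ ^ 2 = ENNReal.ofReal ((1 - lam)⁻¹ ^ 2) := by
    have : 0 < 1 - lam := sub_pos.2 hlam.2
    rw [ENNReal.ofReal_pow (by positivity), ENNReal.ofReal_inv_of_pos this,
      ENNReal.ofReal_sub _ hlam.1.le, ENNReal.ofReal_one]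
  simp only [hgeom] at hsq
  refine ⟨R, δ₀ ^ K, (1 - lam)⁻¹ ^ 2, hp, h1, pow_pos hδ₀.1 K, pow_le_one₀ hδ₀.1.le hδ₀.2.le, hR,
    fun s t => ne_top_of_le_ne_top (by finiteness) (hsq s t), fun w => ?_⟩
  simpa [div_self (h4.1 w).ne'] using hsq w w

section Branches

/-- The points of the branch `Δ_w` that a walk of range `S` may reach from outside `Δ_w` in one
step. -/
def collar (S : ℕ) (w : Word) : Set Word := {y ∈ Delta w | y.length ≤ w.length + S}

/-- The complement of the branch `Δ_w`, together with the collar of the branch. -/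
def exterior (S : ℕ) (w : Word) : Set Word := (Delta w)ᶜ ∪ collar S w

lemma length_le_of_mem_Delta {w x : Word} (h : x ∈ Delta w) : w.length ≤ x.length :=
  List.IsSuffix.length_le h

lemma self_mem_collar (S : ℕ) (w : Word) : w ∈ collar S w := ⟨List.suffix_rfl, by omega⟩

lemma mem_exterior_of_length_le {S : ℕ} {w x : Word} (h : x.length ≤ w.length + S) :
    x ∈ exterior S w := by
  by_cases hx : x ∈ Delta w
  · exact .inr ⟨hx, h⟩
  · exact .inl hx

lemma H1.mem_collar {p : Word → Word → ℝ} {S : ℕ} (h1 : H1 p S) {w x y : Word} (hx : x ∉ Delta w)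
    (hy : y ∈ Delta w) (hxy : p x y ≠ 0) : y ∈ collar S w :=
  ⟨hy, (length_le_of_mem_Delta_of_notMem hy hx).trans (by have := h1.treeDist_le hxy; omega)⟩

lemma H1.mem_exterior {p : Word → Word → ℝ} {S : ℕ} (h1 : H1 p S) {w x y : Word}
    (hx : x ∉ Delta w) (hxy : p x y ≠ 0) : y ∈ exterior S w := by
  by_cases hy : y ∈ Delta w
  · exact .inr (h1.mem_collar hx hy hxy)
  · exact .inl hy

lemma exists_meet (t u : Word) : ∃ w, w <:+ u ∧ w <:+ t ∧
    (w = t ∨ ∃ a, t ∈ Delta (a :: w) ∧ u ∉ Delta (a :: w)) := by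
  induction t with
  | nil => exact ⟨[], List.nil_suffix, List.nil_suffix, .inl rfl⟩
  | cons a t ih =>
    obtain ⟨w, hwu, hwt, rfl | ⟨b, hbt, hbu⟩⟩ := ih
    · by_cases h : a :: w <:+ u
      · exact ⟨a :: w, h, List.suffix_rfl, .inl rfl⟩
      · exact ⟨w, hwu, hwt.trans (List.suffix_cons _ _), .inr ⟨a, List.suffix_rfl, h⟩⟩
    · exact ⟨w, hwu, hwt.trans (List.suffix_cons _ _),
        .inr ⟨b, List.IsSuffix.trans hbt (List.suffix_cons _ _), hbu⟩⟩

/-- Two-sided bounds `β ≤ G(y, t) / G(y, t') ≤ α` for all `y` in the exterior of `Δ_w`. -/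
def RatioBounds (p : Word → Word → ℝ) (S : ℕ) (β α : ℝ) (w t t' : Word) : Prop :=
  ∀ y ∈ exterior S w, β * green p y t' ≤ green p y t ∧ green p y t ≤ α * green p y t'

end Branches

section Ends

open Filter Topology

lemma endWord_succ (ω : ℕ → Bool) (k : ℕ) : endWord ω (k + 1) = ω k :: endWord ω k := by
  simp [endWord, List.range_succ]

lemma length_endWord (ω : ℕ → Bool) (k : ℕ) : (endWord ω k).length = k := by
  simp [endWord]

lemma endWord_suffix (ω : ℕ → Bool) {k l : ℕ} (h : k ≤ l) : endWord ω k <:+ endWord ω l := by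
  induction h with
  | refl => exact List.suffix_rfl
  | step _ ih => exact ih.trans (endWord_succ ω _ ▸ List.suffix_cons _ _)

lemma antitone_Delta_endWord (ω : ℕ → Bool) : Antitone fun k => Delta (endWord ω k) :=
  fun _ _ h _ ht => (endWord_suffix ω h).trans ht

/-- The filter of neighbourhoods, in the set of words, of the end `ω` of the tree. -/
def endFilter (ω : ℕ → Bool) : Filter Word := ⨅ k, 𝓟 (Delta (endWord ω k))

lemma hasBasis_endFilter (ω : ℕ → Bool) :
    (endFilter ω).HasBasis (fun _ => True) fun k => Delta (endWord ω k) :=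
  hasBasis_iInf_principal (antitone_Delta_endWord ω).directed_ge

instance neBot_endFilter (ω : ℕ → Bool) : (endFilter ω).NeBot :=
  (hasBasis_endFilter ω).neBot_iff.2 fun {k} _ => ⟨endWord ω k, List.suffix_rfl⟩

lemma exists_tendsto_endFilter {ω : ℕ → Bool} {f : Word → ℝ}
    (h : ∀ ε > 0, ∃ k, ∀ t ∈ Delta (endWord ω k), ∀ t' ∈ Delta (endWord ω k), f t - f t' < ε) :
    ∃ L, Tendsto f (endFilter ω) (𝓝 L) := by
  have hcauchy : Cauchy (map f (endFilter ω)) := by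
    refine Metric.cauchy_iff.2 ⟨inferInstance, fun ε hε => ?_⟩
    obtain ⟨k, hk⟩ := h ε hε
    refine ⟨f '' Delta (endWord ω k),
      image_mem_map ((hasBasis_endFilter ω).mem_of_mem trivial), ?_⟩
    rintro _ ⟨t, ht, rfl⟩ _ ⟨t', ht', rfl⟩
    exact abs_sub_lt_iff.2 ⟨hk t ht t' ht', hk t' ht' t ht⟩
  exact CompleteSpace.complete hcauchy

lemma exists_tendsto_endFilter_of_approx {ω : ℕ → Bool} {f : Word → ℝ}
    (h : ∀ ε > 0, ∃ g : Word → ℝ, (∃ L, Tendsto g (endFilter ω) (𝓝 L)) ∧ ∀ t, |f t - g t| ≤ ε) :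
    ∃ L, Tendsto f (endFilter ω) (𝓝 L) := by
  refine exists_tendsto_endFilter fun ε hε => ?_
  obtain ⟨g, ⟨L, hL⟩, hfg⟩ := h (ε / 4) (by positivity)
  obtain ⟨k, -, hk⟩ := (hasBasis_endFilter ω).eventually_iff.1
    (Metric.tendsto_nhds.1 hL (ε / 4) (by positivity))
  refine ⟨k, fun t ht t' ht' => ?_⟩
  have hgt := abs_lt.1 (hk ht)
  have hgt' := abs_lt.1 (hk ht')
  linarith [(abs_le.1 (hfg t)).2, (abs_le.1 (hfg t')).1]

end Ends

namespace UniformWalk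

open Filter Topology

variable {p : Word → Word → ℝ} {S R : ℕ} {η Λ : ℝ} (W : UniformWalk p S R η Λ)
include W

section GreenKernel

lemma greenE_ne_top (s t : Word) : greenE Set.univ p s t ≠ ⊤ :=
  greenE_ne_top_of_tsum_ne_top (W.tsum_ne_top s t)

lemma ofReal_green (s t : Word) : ENNReal.ofReal (green p s t) = greenE Set.univ p s t :=
  Paper.ofReal_green (W.greenE_ne_top s t)

lemma one_le_green_self (w : Word) : 1 ≤ green p w w := by
  rw [← ENNReal.toReal_one, green]
  exact ENNReal.toReal_mono (W.greenE_ne_top w w) (one_le_greenE_self p w)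

lemma green_self_le (w : Word) : green p w w ≤ Λ := by
  have hle : greenE Set.univ p w w ≤ ENNReal.ofReal Λ :=
    calc greenE Set.univ p w w
        ≤ greenE Set.univ p w w * greenE Set.univ p w w :=
          le_mul_of_one_le_right' (one_le_greenE_self p w)
      _ ≤ ∑' u, greenE Set.univ p w u * greenE Set.univ p u w := ENNReal.le_tsum w
      _ ≤ ENNReal.ofReal Λ := W.tsum_self_le w
  rw [← W.ofReal_green, ENNReal.ofReal_le_ofReal_iff'] at hle
  exact hle.resolve_right (by linarith [W.one_le_green_self w])

lemma one_le_bound : 1 ≤ Λ := (W.one_le_green_self []).trans (W.green_self_le [])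

lemma green_mul_green_le (x w y : Word) : green p x w * green p w y ≤ Λ * green p x y := by
  have hle : green p x w * green p w y ≤ green p w w * green p x y := by
    simpa only [green, ENNReal.toReal_mul] using ENNReal.toReal_mono
      (ENNReal.mul_ne_top (W.greenE_ne_top w w) (W.greenE_ne_top x y))
      (greenE_mul_greenE_le p x w y)
  exact hle.trans (mul_le_mul_of_nonneg_right (W.green_self_le w) (green_nonneg p x y))

lemma isSuperOn_green (V : Set Word) (t : Word) : IsSuperOn p V fun y => green p y t where
  nonneg y _ := green_nonneg p y t
  mul_le y _ y' _ := by
    have hfin := W.greenE_ne_top y t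
    calc p y y' * green p y' t ≤ ∑' v, p y v * green p v t :=
          (summable_mul_green W.nonneg hfin).le_tsum y' fun v _ =>
            mul_nonneg (W.nonneg y v) (green_nonneg p v t)
      _ ≤ green p y t := by
        rw [green_eq_zero_step_add W.nonneg hfin]
        exact le_add_of_nonneg_left ENNReal.toReal_nonneg

lemma pow_length_mul_green_le (s t : Word) :
    η ^ s.length * green p s t ≤ green p [] t ∧ η ^ s.length * green p [] t ≤ green p s t := by
  simpa only [List.append_nil] using
    W.edge_harnack.pow_length W.pos.le [] s (W.isSuperOn_green _ t)

lemma green_pos (s t : Word) : 0 < green p s t := by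
  have hη := W.pos
  have hroot : 0 < green p [] t :=
    lt_of_lt_of_le (mul_pos (pow_pos hη _) (one_pos.trans_le (W.one_le_green_self t)))
      (W.pow_length_mul_green_le t t).1
  exact lt_of_lt_of_le (mul_pos (pow_pos hη _) hroot) (W.pow_length_mul_green_le s t).2

lemma collar_harnack {w y : Word} {c : Word → ℝ}
    (hc : IsSuperOn p {y | y.length ≤ w.length + S + R} c) (hy : y ∈ collar S w) :
    η ^ S * c y ≤ c w ∧ η ^ S * c w ≤ c y := by
  obtain ⟨⟨u, rfl⟩, hlen⟩ := hy
  rw [List.length_append] at hlen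
  have hu : u.length ≤ S := by omega
  have hpow : η ^ S ≤ η ^ u.length := pow_le_pow_of_le_one W.pos.le W.le_one hu
  have hword := W.edge_harnack.pow_length W.pos.le w u <| hc.mono fun y hy => by
    simp only [Set.mem_ofPred_eq] at hy ⊢
    omega
  have hcw : 0 ≤ c w := hc.nonneg w (by simp only [Set.mem_ofPred_eq]; omega)
  have hcu : 0 ≤ c (u ++ w) :=
    hc.nonneg (u ++ w) (by simp only [Set.mem_ofPred_eq, List.length_append]; omega)
  exact ⟨(mul_le_mul_of_nonneg_right hpow hcu).trans hword.1,
    (mul_le_mul_of_nonneg_right hpow hcw).trans hword.2⟩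

lemma collar_green_harnack {w y : Word} (hy : y ∈ collar S w) (t : Word) :
    η ^ S * green p y t ≤ green p w t ∧ η ^ S * green p w t ≤ green p y t :=
  W.collar_harnack (c := fun y => green p y t) (W.isSuperOn_green _ t) hy

lemma mul_green_le_on_exterior {w t t' : Word} {k l : ℝ} (ht : t ∈ Delta w) (hk : 0 ≤ k)
    (hl : 0 ≤ l) (collar_le : ∀ y ∈ collar S w, k * green p y t ≤ l * green p y t') {x : Word}
    (hx : x ∈ exterior S w) : k * green p x t ≤ l * green p x t' := by
  obtain hx | hx := hx
  swap
  · exact collar_le x hx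
  have hofReal (κ : ℝ) (hκ : 0 ≤ κ) (y v : Word) :
      ENNReal.ofReal κ * greenE Set.univ p y v = ENNReal.ofReal (κ * green p y v) := by
    rw [ENNReal.ofReal_mul hκ, W.ofReal_green]
  have hle : ENNReal.ofReal k * greenE Set.univ p x t ≤
      ENNReal.ofReal l * greenE Set.univ p x t' := by
    refine mul_greenE_le_of_superharmonic (U := (Delta w)ᶜ) (not_not_intro ht)
      (h := fun y => ENNReal.ofReal l * greenE Set.univ p y t') (fun u _ => ?_)
      (fun u hu y hy hpos => ?_) hx
    · simp only [mul_left_comm _ (ENNReal.ofReal l), ENNReal.tsum_mul_left]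
      exact mul_le_mul_right (tsum_mul_greenE_le p u t') _
    · rw [hofReal k hk, hofReal l hl]
      exact ENNReal.ofReal_le_ofReal
        (collar_le y (W.finite_range.mem_collar hu (not_not.1 hy) hpos.ne'))
  rw [hofReal k hk, hofReal l hl] at hle
  exact (ENNReal.ofReal_le_ofReal_iff (mul_nonneg hl (green_nonneg p x t'))).1 hle

lemma green_le_through {w t x : Word} (ht : t ∈ Delta w) (hx : x ∈ exterior S w) :
    (η ^ S) ^ 2 * green p x t ≤ green p x w * green p w t := by
  have hη := pow_pos W.pos S
  rw [mul_comm (green p x w)]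
  refine W.mul_green_le_on_exterior ht (sq_nonneg _) (green_nonneg p w t) (fun y hy => ?_) hx
  have hyw : η ^ S ≤ green p y w :=
    (le_mul_of_one_le_right hη.le (W.one_le_green_self w)).trans (W.collar_green_harnack hy w).2
  calc (η ^ S) ^ 2 * green p y t = η ^ S * green p y t * η ^ S := by ring
    _ ≤ green p w t * green p y w :=
      mul_le_mul (W.collar_green_harnack hy t).1 hyw hη.le (green_nonneg p w t)

lemma green_le_through_meet (t u : Word) : ∃ w, w <:+ u ∧ w <:+ t ∧
    (η ^ S) ^ 2 * η ^ 2 * green p u t ≤ Λ * (green p u w * green p w t) := by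
  have hη := W.pos
  have hηS : (η ^ S) ^ 2 ≤ 1 := pow_le_one₀ (by positivity) (pow_le_one₀ hη.le W.le_one)
  have hΛ : 0 ≤ Λ := zero_le_one.trans W.one_le_bound
  obtain ⟨w, hwu, hwt, rfl | ⟨a, ht, hu⟩⟩ := exists_meet t u <;> refine ⟨w, hwu, hwt, ?_⟩
  · calc (η ^ S) ^ 2 * η ^ 2 * green p u w
        ≤ 1 * green p u w := mul_le_mul_of_nonneg_right
          (mul_le_one₀ hηS (sq_nonneg η) (pow_le_one₀ hη.le W.le_one)) (green_nonneg p u w)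
      _ ≤ Λ * (green p u w * green p w w) := mul_le_mul W.one_le_bound
          (le_mul_of_one_le_right (green_nonneg p u w) (W.one_le_green_self w))
          (green_nonneg p u w) hΛ
  · have edge (v : Word) := W.edge_harnack a w (fun y => green p y v) (W.isSuperOn_green _ v)
    have hxw : η ≤ green p (a :: w) w :=
      (le_mul_of_one_le_right hη.le (W.one_le_green_self w)).trans (edge w).2
    have hux : green p u (a :: w) * η ≤ Λ * green p u w :=
      (mul_le_mul_of_nonneg_left hxw (green_nonneg p u _)).trans (W.green_mul_green_le u _ w)
    calc (η ^ S) ^ 2 * η ^ 2 * green p u t = η ^ 2 * ((η ^ S) ^ 2 * green p u t) := by ring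
      _ ≤ η ^ 2 * (green p u (a :: w) * green p (a :: w) t) :=
        mul_le_mul_of_nonneg_left (W.green_le_through ht (.inl hu)) (sq_nonneg η)
      _ = green p u (a :: w) * η * (η * green p (a :: w) t) := by ring
      _ ≤ Λ * green p u w * green p w t := mul_le_mul hux (edge t).1
          (mul_nonneg hη.le (green_nonneg p _ t)) (mul_nonneg hΛ (green_nonneg p u w))
      _ = Λ * (green p u w * green p w t) := mul_assoc _ _ _

lemma green_mul_green_le_of_meet (s : Word) : ∃ c : ℝ, 0 < c ∧ ∀ u t, ∃ w, w <:+ u ∧ w <:+ t ∧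
    green p s u * green p u t ≤ c * (green p [] t * (green p w u * green p u w)) := by
  have hη := W.pos
  have hΛ : 0 < Λ := one_pos.trans_le W.one_le_bound
  refine ⟨Λ ^ 2 / (η ^ s.length * (η ^ S) ^ 2 * ((η ^ S) ^ 2 * η ^ 2)), by positivity,
    fun u t => ?_⟩
  obtain ⟨w, hwu, hwt, hut⟩ := W.green_le_through_meet t u
  refine ⟨w, hwu, hwt, ?_⟩
  have hsu := (W.pow_length_mul_green_le s u).1
  have hroot : (η ^ S) ^ 2 * green p [] u ≤ green p [] w * green p w u :=
    W.green_le_through hwu (mem_exterior_of_length_le (Nat.zero_le _))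
  have hG := W.green_pos
  rw [div_mul_eq_mul_div, le_div_iff₀ (by positivity)]
  calc green p s u * green p u t * (η ^ s.length * (η ^ S) ^ 2 * ((η ^ S) ^ 2 * η ^ 2))
      = (η ^ S) ^ 2 * (η ^ s.length * green p s u) * ((η ^ S) ^ 2 * η ^ 2 * green p u t) := by ring
    _ ≤ (η ^ S) ^ 2 * green p [] u * (Λ * (green p u w * green p w t)) := by
      have := (hG u t).le
      have := (hG [] u).le
      gcongr
    _ ≤ green p [] w * green p w u * (Λ * (green p u w * green p w t)) := by
      have := (hG u w).le
      have := (hG w t).le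
      gcongr
    _ = Λ * (green p [] w * green p w t) * (green p w u * green p u w) := by ring
    _ ≤ Λ * (Λ * green p [] t) * (green p w u * green p u w) := by
      have := (hG w u).le
      have := (hG u w).le
      have := W.green_mul_green_le [] w t
      gcongr
    _ = Λ ^ 2 * (green p [] t * (green p w u * green p u w)) := by ring

end GreenKernel

section Ratios

lemma le_of_ratio_bounds {β α : ℝ} {y t t' : Word}
    (h : β * green p y t' ≤ green p y t ∧ green p y t ≤ α * green p y t') : β ≤ α :=
  le_of_mul_le_mul_right (h.1.trans h.2) (W.green_pos y t')

lemma ratioBounds_of_collar {β α : ℝ} (hβ : 0 ≤ β) {w t t' : Word} (ht : t ∈ Delta w)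
    (ht' : t' ∈ Delta w)
    (h : ∀ y ∈ collar S w, β * green p y t' ≤ green p y t ∧ green p y t ≤ α * green p y t') :
    RatioBounds p S β α w t t' := by
  have hβα : β ≤ α := W.le_of_ratio_bounds (h w (self_mem_collar S w))
  intro y hy
  constructor
  · simpa only [one_mul] using W.mul_green_le_on_exterior ht' hβ zero_le_one
      (fun v hv => by simpa only [one_mul] using (h v hv).1) hy
  · simpa only [one_mul] using W.mul_green_le_on_exterior ht zero_le_one (hβ.trans hβα)
      (fun v hv => by simpa only [one_mul] using (h v hv).2) hy

lemma isSuperOn_add_mul_green {w t t' : Word} (ht : t ∈ Delta w) (ht' : t' ∈ Delta w) {k l : ℝ}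
    (h : ∀ y ∈ exterior S w, 0 ≤ k * green p y t + l * green p y t') :
    IsSuperOn p (Delta w)ᶜ fun y => k * green p y t + l * green p y t' where
  nonneg y hy := h y (.inl hy)
  mul_le y hy y' _ := by
    have hterm (v : Word) : 0 ≤ p y v * (k * green p v t + l * green p v t') := by
      by_cases hv : p y v = 0
      · rw [hv, zero_mul]
      · exact mul_nonneg (W.nonneg y v) (h v (W.finite_range.mem_exterior hy hv))
    have hmean {v : Word} (hv : v ∈ Delta w) :
        HasSum (fun u => p y u * green p u v) (green p y v) := by
      have hyv : y ≠ v := fun heq => hy (heq ▸ hv)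
      rw [green_eq_tsum W.nonneg (W.greenE_ne_top y v) hyv]
      exact (summable_mul_green W.nonneg (W.greenE_ne_top y v)).hasSum
    have hsum := ((hmean ht).mul_left k).add ((hmean ht').mul_left l)
    simp only [mul_left_comm _ (p y _), ← mul_add] at hsum
    exact le_hasSum hsum y' fun v _ => hterm v

lemma fraction_of_add_le {w y : Word} {c d : Word → ℝ}
    (hc : IsSuperOn p {y | y.length ≤ w.length + S + R} c)
    (hd : IsSuperOn p {y | y.length ≤ w.length + S + R} d) (hdc : d w ≤ c w)
    (hy : y ∈ collar S w) : (η ^ S) ^ 2 / 2 * (c y + d y) ≤ c y := by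
  have hη := pow_pos W.pos S
  calc (η ^ S) ^ 2 / 2 * (c y + d y) = η ^ S / 2 * (η ^ S * c y + η ^ S * d y) := by ring
    _ ≤ η ^ S / 2 * (c w + d w) := by
      gcongr
      exacts [(W.collar_harnack hc hy).1, (W.collar_harnack hd hy).1]
    _ ≤ η ^ S / 2 * (c w + c w) := by gcongr
    _ = η ^ S * c w := by ring
    _ ≤ c y := (W.collar_harnack hc hy).2

/-- Whichever of the two gaps `G(·, t) - β G(·, t')` and `α G(·, t') - G(·, t)` is the larger one at
`w` takes a fixed fraction of their sum `(α - β) G(·, t')` on the collar of `w`. -/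
lemma exists_ratioBounds_contraction {w w' t t' : Word} (hw : w <:+ w')
    (hlen : w.length + S + R < w'.length) (ht : t ∈ Delta w') (ht' : t' ∈ Delta w') {β α : ℝ}
    (hβ : 0 ≤ β) (h : RatioBounds p S β α w' t t') :
    ∃ β' α', β ≤ β' ∧ α' - β' ≤ (1 - (η ^ S) ^ 2 / 2) * (α - β) ∧
      RatioBounds p S β' α' w t t' := by
  have hball : {y : Word | y.length ≤ w.length + S + R} ⊆ (Delta w')ᶜ := fun y hy hmem =>
    absurd (length_le_of_mem_Delta hmem) (not_le.2 (lt_of_le_of_lt hy hlen))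
  have hlower := (W.isSuperOn_add_mul_green ht ht' (k := 1) (l := -β) fun y hy => by
    linarith [(h y hy).1]).mono hball
  have hupper := (W.isSuperOn_add_mul_green ht ht' (k := -1) (l := α) fun y hy => by
    linarith [(h y hy).2]).mono hball
  have hβα : β ≤ α := W.le_of_ratio_bounds (h w' (.inr (self_mem_collar S w')))
  have hgain : 0 ≤ (η ^ S) ^ 2 / 2 * (α - β) := mul_nonneg (by positivity) (sub_nonneg.2 hβα)
  have hcollar {y : Word} (hy : y ∈ collar S w) :=
    h y (.inl (hball (show y.length ≤ w.length + S + R from hy.2.trans (Nat.le_add_right _ R))))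
  have bounds {β' α' : ℝ} (hβ' : β ≤ β') := W.ratioBounds_of_collar (S := S) (α := α')
    (hβ.trans hβ') (hw.trans ht) (hw.trans ht')
  obtain hle | hle := le_total (-1 * green p w t + α * green p w t')
    (1 * green p w t + -β * green p w t')
  · refine ⟨β + (η ^ S) ^ 2 / 2 * (α - β), α, by linarith, by linarith,
      bounds (by linarith) fun y hy => ?_⟩
    have := W.fraction_of_add_le hlower hupper hle hy
    exact ⟨by linarith, (hcollar hy).2⟩
  · refine ⟨β, α - (η ^ S) ^ 2 / 2 * (α - β), le_rfl, by linarith, bounds le_rfl fun y hy => ?_⟩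
    have := W.fraction_of_add_le hupper hlower hle hy
    exact ⟨(hcollar hy).1, by linarith⟩

lemma exists_ratioBounds {w t t' : Word} (ht : t ∈ Delta w) (ht' : t' ∈ Delta w) :
    ∃ β α, 0 < β ∧ α - β ≤ (η ^ S)⁻¹ ^ 4 * β ∧ RatioBounds p S β α w t t' := by
  have hη := pow_pos W.pos S
  have hG := W.green_pos
  set r := green p w t / green p w t'
  have hr_pos : 0 < r := div_pos (hG w t) (hG w t')
  have hrw : green p w t = r * green p w t' := (div_mul_cancel₀ _ (hG w t').ne').symm
  refine ⟨(η ^ S) ^ 2 * r, (η ^ S)⁻¹ ^ 2 * r, by positivity, ?_,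
    W.ratioBounds_of_collar (by positivity) ht ht' fun y hy => ?_⟩
  · have : (η ^ S)⁻¹ ^ 4 * ((η ^ S) ^ 2 * r) = (η ^ S)⁻¹ ^ 2 * r := by field_simp
    rw [this, sub_le_self_iff]
    positivity
  · obtain ⟨upper, lower⟩ := W.collar_green_harnack hy t
    obtain ⟨upper', lower'⟩ := W.collar_green_harnack hy t'
    constructor
    · calc (η ^ S) ^ 2 * r * green p y t' = η ^ S * r * (η ^ S * green p y t') := by ring
        _ ≤ η ^ S * r * green p w t' := by gcongr
        _ = η ^ S * green p w t := by rw [hrw]; ring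
        _ ≤ green p y t := lower
    · calc green p y t = (η ^ S)⁻¹ * (η ^ S * green p y t) := by field_simp
        _ ≤ (η ^ S)⁻¹ * green p w t := by gcongr
        _ = (η ^ S)⁻¹ ^ 2 * r * (η ^ S * green p w t') := by rw [hrw]; field_simp
        _ ≤ (η ^ S)⁻¹ ^ 2 * r * green p y t' := by gcongr

end Ratios

section MartinKernel

lemma exists_ratioBounds_endWord : ∃ (N : ℕ) (κ C : ℝ), 0 ≤ κ ∧ κ < 1 ∧ 0 ≤ C ∧
    ∀ (ω : ℕ → Bool) (n k : ℕ), ∀ t ∈ Delta (endWord ω (k + n * N)),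
      ∀ t' ∈ Delta (endWord ω (k + n * N)),
        ∃ β α, 0 < β ∧ α - β ≤ κ ^ n * C * β ∧ RatioBounds p S β α (endWord ω k) t t' := by
  have hη := pow_pos W.pos S
  have hηS : (η ^ S) ^ 2 ≤ 1 := pow_le_one₀ hη.le (pow_le_one₀ W.pos.le W.le_one)
  have hκ : 0 ≤ 1 - (η ^ S) ^ 2 / 2 := by linarith
  refine ⟨S + R + 1, 1 - (η ^ S) ^ 2 / 2, (η ^ S)⁻¹ ^ 4, hκ,
    by linarith [pow_pos hη 2], by positivity, fun ω n => ?_⟩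
  induction n with
  | zero =>
    intro k t ht t' ht'
    simp only [zero_mul, add_zero, pow_zero, one_mul] at ht ht' ⊢
    exact W.exists_ratioBounds ht ht'
  | succ n ih =>
    intro k t ht t' ht'
    rw [add_one_mul, add_comm (n * _), ← add_assoc] at ht ht'
    obtain ⟨β, α, hβ, hβα, hbounds⟩ := ih (k + (S + R + 1)) t ht t' ht'
    have hanti := antitone_Delta_endWord ω (Nat.le_add_right (k + (S + R + 1)) (n * (S + R + 1)))
    obtain ⟨β', α', hβ', hβα', hbounds'⟩ := W.exists_ratioBounds_contraction
      (endWord_suffix ω (Nat.le_add_right k (S + R + 1)))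
      (by simp only [length_endWord]; omega) (hanti ht) (hanti ht') hβ.le hbounds
    refine ⟨β', α', hβ.trans_le hβ', ?_, hbounds'⟩
    calc α' - β' ≤ (1 - (η ^ S) ^ 2 / 2) * (α - β) := hβα'
      _ ≤ (1 - (η ^ S) ^ 2 / 2) *
          ((1 - (η ^ S) ^ 2 / 2) ^ n * (η ^ S)⁻¹ ^ 4 * β') := by
        gcongr
        exact hβα.trans (by gcongr)
      _ = (1 - (η ^ S) ^ 2 / 2) ^ (n + 1) * (η ^ S)⁻¹ ^ 4 * β' := by ring

lemma green_div_green_nil_le (s t : Word) : green p s t / green p [] t ≤ (η ^ s.length)⁻¹ := by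
  rw [inv_eq_one_div, div_le_div_iff₀ (W.green_pos [] t) (pow_pos W.pos _), one_mul, mul_comm]
  exact (W.pow_length_mul_green_le s t).1

lemma div_sub_div_le_of_ratioBounds {β α : ℝ} (hβ : 0 < β) {w x y t t' : Word}
    (h : RatioBounds p S β α w t t') (hx : x ∈ exterior S w) (hy : y ∈ exterior S w) :
    green p x t / green p y t - green p x t' / green p y t' ≤
      (α - β) / β * (green p x t' / green p y t') := by
  have hG := W.green_pos
  have hle : green p x t / green p y t ≤ α / β * (green p x t' / green p y t') := by
    rw [div_mul_div_comm]
    exact div_le_div₀ ((hG x t).le.trans (h x hx).2) (h x hx).2 (mul_pos hβ (hG y t')) (h y hy).1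
  have hsub : (α - β) / β = α / β - 1 := by rw [sub_div, div_self hβ.ne']
  rw [hsub, sub_one_mul]
  exact sub_le_sub_right hle _

theorem exists_tendsto_martinKernel (ω : ℕ → Bool) (s : Word) :
    ∃ L, Tendsto (fun t => green p s t / green p [] t) (endFilter ω) (𝓝 L) := by
  obtain ⟨N, κ, C, hκ, hκ_lt, hC, hratio⟩ := W.exists_ratioBounds_endWord
  refine exists_tendsto_endFilter fun ε hε => ?_
  have hlim : Tendsto (fun n : ℕ => κ ^ n * C * (η ^ s.length)⁻¹) atTop (𝓝 0) := by
    simpa only [zero_mul] using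
      ((tendsto_pow_atTop_nhds_zero_of_lt_one hκ hκ_lt).mul_const C).mul_const (η ^ s.length)⁻¹
  obtain ⟨n, hn⟩ := (hlim.eventually (gt_mem_nhds hε)).exists
  refine ⟨s.length + n * N, fun t ht t' ht' => ?_⟩
  obtain ⟨β, α, hβ, hβα, hbounds⟩ := hratio ω n s.length t ht t' ht'
  have hexterior {x : Word} (hx : x.length ≤ s.length) : x ∈ exterior S (endWord ω s.length) :=
    mem_exterior_of_length_le (by rw [length_endWord]; omega)
  calc green p s t / green p [] t - green p s t' / green p [] t'
      ≤ (α - β) / β * (green p s t' / green p [] t') :=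
        W.div_sub_div_le_of_ratioBounds hβ hbounds (hexterior le_rfl) (hexterior (Nat.zero_le _))
    _ ≤ κ ^ n * C * (η ^ s.length)⁻¹ :=
        mul_le_mul ((div_le_iff₀ hβ).2 hβα) (W.green_div_green_nil_le s t')
          (div_nonneg (green_nonneg p _ _) (green_nonneg p _ _)) (by positivity)
    _ < ε := hn

end MartinKernel

section Perturbation

/-- A term of `∑ u, q ^ |u| G(s, u) G(u, t)` is controlled by the suffix of `t` at which the
geodesic to `u` leaves it; summing over all suffixes of `t` removes the dependence on `u`. -/
lemma pow_length_mul_green_mul_green_le {c r : ℝ} (hc : 0 ≤ c) (hr : r ∈ Set.Ioo (0 : ℝ) 1)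
    {s t u w : Word} (hwu : w <:+ u) (hwt : w <:+ t)
    (hmeet : green p s u * green p u t ≤ c * (green p [] t * (green p w u * green p u w)))
    {n : ℕ} (hn : n ≤ u.length) :
    ENNReal.ofReal ((r * r) ^ u.length * (green p s u * green p u t)) ≤
      ∑' j : ℕ, ENNReal.ofReal (c * r ^ n * green p [] t) * (ENNReal.ofReal (r ^ j) *
        (greenE Set.univ p (t.drop (t.length - j)) u *
          greenE Set.univ p u (t.drop (t.length - j)))) := by
  have hr₀ := hr.1.le
  have hG := green_nonneg p
  have hpow : (r * r) ^ u.length ≤ r ^ n * r ^ w.length := by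
    rw [mul_pow]
    have := pow_le_pow_of_le_one hr₀ hr.2.le hn
    have := pow_le_pow_of_le_one hr₀ hr.2.le hwu.length_le
    gcongr
  refine le_trans ?_ (ENNReal.le_tsum w.length)
  have hcG : 0 ≤ c * r ^ n * green p [] t :=
    mul_nonneg (mul_nonneg hc (pow_nonneg hr₀ n)) (hG [] t)
  rw [← List.suffix_iff_eq_drop.1 hwt, ← W.ofReal_green, ← W.ofReal_green,
    ← ENNReal.ofReal_mul (hG w u), ← ENNReal.ofReal_mul (pow_nonneg hr₀ _),
    ← ENNReal.ofReal_mul hcG]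
  refine ENNReal.ofReal_le_ofReal ?_
  calc (r * r) ^ u.length * (green p s u * green p u t)
      ≤ r ^ n * r ^ w.length * (c * (green p [] t * (green p w u * green p u w))) :=
        mul_le_mul hpow hmeet (mul_nonneg (hG s u) (hG u t)) (by positivity)
    _ = c * r ^ n * green p [] t * (r ^ w.length * (green p w u * green p u w)) := by ring

lemma exists_tail_bound (s : Word) {q : ℝ} (hq : q ∈ Set.Ioo (0 : ℝ) 1) :
    ∃ C : ℝ, 0 ≤ C ∧ ∀ (n : ℕ) (t : Word) (V : Set Word), (∀ u ∈ V, n ≤ u.length) →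
      ∑' u : V, ENNReal.ofReal (q ^ u.1.length * (green p s u * green p u t)) ≤
        ENNReal.ofReal (C * √q ^ n * green p [] t) := by
  obtain ⟨c, hc, hmeet⟩ := W.green_mul_green_le_of_meet s
  have hr : √q ∈ Set.Ioo (0 : ℝ) 1 := by simpa [Real.sqrt_lt'] using hq
  have hΛ : 0 ≤ Λ := zero_le_one.trans W.one_le_bound
  have hgeom : ∑' j : ℕ, ENNReal.ofReal (√q ^ j) = ENNReal.ofReal (1 - √q)⁻¹ := by
    rw [← ENNReal.ofReal_tsum_of_nonneg (fun j => pow_nonneg hr.1.le j)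
      (summable_geometric_of_lt_one hr.1.le hr.2), tsum_geometric_of_lt_one hr.1.le hr.2]
  have hinv : 0 ≤ (1 - √q)⁻¹ := inv_nonneg.2 (sub_nonneg.2 hr.2.le)
  refine ⟨c * (1 - √q)⁻¹ * Λ, by positivity, fun n t V hV => ?_⟩
  let gg (j : ℕ) (u : Word) : ℝ≥0∞ := greenE Set.univ p (t.drop (t.length - j)) u *
    greenE Set.univ p u (t.drop (t.length - j))
  have hcG : 0 ≤ c * √q ^ n * green p [] t :=
    mul_nonneg (by positivity) (green_nonneg p [] t)
  calc ∑' u : V, ENNReal.ofReal (q ^ u.1.length * (green p s u * green p u t))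
      ≤ ∑' (u : V) (j : ℕ), ENNReal.ofReal (c * √q ^ n * green p [] t) *
          (ENNReal.ofReal (√q ^ j) * gg j u) := by
        refine ENNReal.tsum_le_tsum fun u => ?_
        obtain ⟨w, hwu, hwt, hw⟩ := hmeet u t
        simpa only [Real.mul_self_sqrt hq.1.le] using
          W.pow_length_mul_green_mul_green_le hc.le hr hwu hwt hw (hV u u.2)
    _ = ENNReal.ofReal (c * √q ^ n * green p [] t) *
          ∑' j : ℕ, ENNReal.ofReal (√q ^ j) * ∑' u : V, gg j u := by
        rw [ENNReal.tsum_comm]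
        simp only [ENNReal.tsum_mul_left]
    _ ≤ ENNReal.ofReal (c * √q ^ n * green p [] t) *
          ∑' j : ℕ, ENNReal.ofReal (√q ^ j) * ENNReal.ofReal Λ := by
        gcongr with j
        exact (ENNReal.tsum_comp_le_tsum_of_injective Subtype.val_injective (gg j)).trans
          (W.tsum_self_le _)
    _ = ENNReal.ofReal (c * (1 - √q)⁻¹ * Λ * √q ^ n * green p [] t) := by
        rw [ENNReal.tsum_mul_right, hgeom, ← ENNReal.ofReal_mul hinv, ← ENNReal.ofReal_mul hcG]
        congr 1
        ring

lemma enorm_greenR_mul_tsum_le {a : Word → Word → ℝ} (hap : ∀ u v, |a u v| ≤ p u v) {q C : ℝ}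
    (hq : 0 ≤ q) (hC : 0 ≤ C) {s u : Word}
    (hrel : greenR Set.univ a s u ≠ 0 → ∀ v, |a u v - p u v| ≤ C * q ^ u.length * p u v)
    (t : Word) :
    ‖greenR Set.univ a s u * ∑' v, (a u v - p u v) * green p v t‖ₑ ≤
      ENNReal.ofReal C * ENNReal.ofReal (q ^ u.length * (green p s u * green p u t)) := by
  by_cases hu : greenR Set.univ a s u = 0
  · simp [hu]
  have hqu := pow_nonneg hq u.length
  calc ‖greenR Set.univ a s u * ∑' v, (a u v - p u v) * green p v t‖ₑ
      ≤ greenE Set.univ p s u * (ENNReal.ofReal (C * q ^ u.length) * greenE Set.univ p u t) := by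
        rw [enorm_mul]
        exact mul_le_mul' (enorm_greenR_le hap s u)
          (enorm_tsum_mul_green_le W.tsum_ne_top (mul_nonneg hC hqu) (hrel hu) t)
    _ = ENNReal.ofReal C * ENNReal.ofReal (q ^ u.length * (green p s u * green p u t)) := by
        rw [ENNReal.ofReal_mul hC, ENNReal.ofReal_mul hqu, ENNReal.ofReal_mul (green_nonneg p s u),
          W.ofReal_green, W.ofReal_green]
        ring

lemma exists_finite_expansion {a : Word → Word → ℝ} (hap : ∀ u v, |a u v| ≤ p u v) {q C : ℝ}
    (hq : q ∈ Set.Ioo (0 : ℝ) 1) (hC : 0 ≤ C) {s : Word}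
    (hrel : ∀ u, greenR Set.univ a s u ≠ 0 → ∀ v, |a u v - p u v| ≤ C * q ^ u.length * p u v) :
    ∃ B, ∀ (n : ℕ) (F : Finset Word), (∀ u ∉ F, n ≤ u.length) → ∀ t,
      |greenR Set.univ a s t / green p [] t - (green p s t / green p [] t +
        ∑ u ∈ F, greenR Set.univ a s u *
          ((∑' v, (a u v - p u v) * green p v t) / green p [] t))| ≤ B * √q ^ n := by
  obtain ⟨B, hB, htail⟩ := W.exists_tail_bound s hq
  refine ⟨C * B, fun n F hF t => ?_⟩
  have hroot := W.green_pos [] t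
  let term (u : Word) : ℝ := greenR Set.univ a s u * ∑' v, (a u v - p u v) * green p v t
  have henorm (k : ℕ) (V : Set Word) (hV : ∀ u ∈ V, k ≤ u.length) :
      ∑' u : V, ‖term u‖ₑ ≤ ENNReal.ofReal (C * (B * √q ^ k * green p [] t)) := by
    rw [ENNReal.ofReal_mul hC]
    refine (ENNReal.tsum_le_tsum fun u : V => W.enorm_greenR_mul_tsum_le hap hq.1.le hC
      (hrel u) t).trans ?_
    rw [ENNReal.tsum_mul_left]
    exact mul_le_mul_right (htail k t V hV) _
  have hsum : Summable term := by
    have hle := henorm 0 Set.univ fun u _ => Nat.zero_le _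
    rw [tsum_univ fun u => ‖term u‖ₑ] at hle
    exact .of_enorm (ne_top_of_le_ne_top ENNReal.ofReal_ne_top hle)
  have hrest : |∑' u : {u // u ∉ F}, term u| ≤ C * (B * √q ^ n * green p [] t) := by
    refine (ENNReal.ofReal_le_ofReal_iff (by positivity)).1 ?_
    rw [← Real.enorm_eq_ofReal_abs]
    exact enorm_tsum_le_tsum_enorm.trans (henorm n {u | u ∉ F} hF)
  have hsplit : greenR Set.univ a s t / green p [] t - (green p s t / green p [] t +
      ∑ u ∈ F, greenR Set.univ a s u *
        ((∑' v, (a u v - p u v) * green p v t) / green p [] t)) =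
      (∑' u : {u // u ∉ F}, term u) / green p [] t := by
    simp only [← mul_div_assoc, ← Finset.sum_div]
    rw [greenR_eq_green_add W.tsum_ne_top hap, ← hsum.sum_add_tsum_subtype_compl F]
    simp only [term]
    ring
  rw [hsplit, abs_div, abs_of_pos hroot, div_le_iff₀ hroot]
  exact hrest.trans_eq (by ring)

lemma exists_tendsto_tsum_mul_martinKernel (ω : ℕ → Bool) {f : Word → ℝ}
    (hf : (Function.support f).Finite) :
    ∃ L, Tendsto (fun t => (∑' v, f v * green p v t) / green p [] t) (endFilter ω) (𝓝 L) := by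
  choose L hL using W.exists_tendsto_martinKernel ω
  have hsum (t : Word) : (∑' v, f v * green p v t) / green p [] t =
      ∑ v ∈ hf.toFinset, f v * (green p v t / green p [] t) := by
    rw [tsum_eq_sum (s := hf.toFinset) fun v hv => by simp_all, Finset.sum_div]
    simp only [mul_div_assoc]
  simp only [hsum]
  exact ⟨_, tendsto_finsetSum _ fun v _ => (hL v).const_mul _⟩

theorem exists_tendsto_greenR_div_green {a : Word → Word → ℝ} (hap : ∀ u v, |a u v| ≤ p u v)
    {q C : ℝ} (hq : q ∈ Set.Ioo (0 : ℝ) 1) (hC : 0 ≤ C) {s : Word}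
    (hrel : ∀ u, greenR Set.univ a s u ≠ 0 → ∀ v, |a u v - p u v| ≤ C * q ^ u.length * p u v)
    (ω : ℕ → Bool) :
    ∃ L, Tendsto (fun t => greenR Set.univ a s t / green p [] t) (endFilter ω) (𝓝 L) := by
  obtain ⟨B, hB⟩ := W.exists_finite_expansion hap hq hC hrel
  refine exists_tendsto_endFilter_of_approx fun ε hε => ?_
  have hr : √q < 1 := by simpa [Real.sqrt_lt'] using hq.2
  have hlim : Tendsto (fun n : ℕ => B * √q ^ n) atTop (𝓝 0) := by
    simpa using (tendsto_pow_atTop_nhds_zero_of_lt_one (Real.sqrt_nonneg q) hr).const_mul B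
  obtain ⟨n, hn⟩ := (hlim.eventually (gt_mem_nhds hε)).exists
  let F := (List.finite_length_lt Bool n).toFinset
  obtain ⟨L₀, hL₀⟩ := W.exists_tendsto_martinKernel ω s
  have hfinite (u : Word) : (Function.support fun v => a u v - p u v).Finite :=
    (W.finite_range.finite_row u).subset fun v hv hpv =>
      hv (by simp [hpv, abs_nonpos_iff.1 ((hap u v).trans_eq hpv)])
  choose L hL using fun u => W.exists_tendsto_tsum_mul_martinKernel ω (hfinite u)
  exact ⟨_, ⟨_, hL₀.add (tendsto_finsetSum F fun u _ => (hL u).const_mul _)⟩,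
    fun t => (hB n F (fun u hu => by simpa [F] using hu) t).trans hn.le⟩

end Perturbation

end UniformWalk

section ZeroExtend

lemma greenR_zeroExtend_of_notMem {X : Type*} {Ω : Set X} (a : X → X → ℝ) {s t : X} (hs : s ∈ Ω)
    (ht : t ∉ Ω) : greenR Set.univ (zeroExtend Ω a) s t = 0 := by
  have (n : ℕ) : IsEmpty (pathSet Ω n s t) := ⟨fun σ => ht (σ.2.2.1 ▸ σ.2.2.2 _)⟩
  rw [← greenR_eq_greenR_zeroExtend a hs]
  simp [greenR, nStepR]

variable {p b : Word → Word → ℝ} {z : Word} {q C : ℝ}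

lemma Perturb.abs_zeroExtend_le (hb : Perturb p b z q C) (hp : ∀ u v, 0 ≤ p u v) (u v : Word) :
    |zeroExtend (Delta z) b u v| ≤ p u v := by
  by_cases hu : u ∈ Delta z <;> by_cases hv : v ∈ Delta z
  · simpa [zeroExtend, hu, hv] using (hb u v hu hv).1
  all_goals simpa [zeroExtend, hu, hv] using hp u v

lemma Perturb.exists_abs_zeroExtend_sub_le (hb : Perturb p b z q C) (hp : ∀ u v, 0 ≤ p u v)
    {S : ℕ} (h1 : H1 p S) {δ₀ : ℝ} (hδ₀ : 0 < δ₀) (h2 : H2 p δ₀)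
    (hq : q ∈ Set.Ioo (0 : ℝ) 1) (hC : 0 ≤ C) :
    ∃ C' : ℝ, 0 ≤ C' ∧ ∀ u ∈ Delta z, ∀ v,
      |zeroExtend (Delta z) b u v - p u v| ≤ C' * q ^ u.length * p u v := by
  have hq₀ := hq.1
  refine ⟨C / δ₀ + (q ^ (z.length + S))⁻¹, by positivity, fun u hu v => ?_⟩
  obtain h0 | hpos := (hp u v).eq_or_lt
  · have hle := hb.abs_zeroExtend_le hp u v
    rw [← h0, abs_nonpos_iff] at hle
    simp [hle, ← h0]
  rw [add_mul, add_mul]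
  by_cases hv : v ∈ Delta z
  · have hinside : C * q ^ u.length ≤ C / δ₀ * q ^ u.length * p u v := by
      rw [div_mul_eq_mul_div, div_mul_eq_mul_div, le_div_iff₀ hδ₀]
      gcongr
      exact h2 u v hpos
    calc |zeroExtend (Delta z) b u v - p u v| ≤ C * q ^ u.length := by
          simpa [zeroExtend, hu, hv] using (hb u v hu hv).2
      _ ≤ C / δ₀ * q ^ u.length * p u v := hinside
      _ ≤ _ := le_add_of_nonneg_right (by positivity)
  · have hlen : u.length ≤ z.length + S :=
      (length_le_of_mem_Delta_of_notMem hu hv).trans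
        (Nat.add_le_add_left (treeDist_comm v u ▸ h1.treeDist_le hpos.ne') _)
    have hone : 1 ≤ (q ^ (z.length + S))⁻¹ * q ^ u.length := by
      rw [inv_mul_eq_div, one_le_div (by positivity)]
      exact pow_le_pow_of_le_one hq₀.le hq.2.le hlen
    calc |zeroExtend (Delta z) b u v - p u v| = p u v := by
          simp [zeroExtend, hv, abs_of_pos hpos]
      _ ≤ (q ^ (z.length + S))⁻¹ * q ^ u.length * p u v := le_mul_of_one_le_left hpos.le hone
      _ ≤ _ := le_add_of_nonneg_left (by positivity)

end ZeroExtend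

theorem prop_3_4_general (p : Word → Word → ℝ) (hp : ∀ s t, 0 ≤ p s t)
    (S : ℕ) (δ₀ : ℝ) (hδ₀ : δ₀ ∈ Set.Ioo (0 : ℝ) 1) (K : ℕ)
    (m : Word → ℝ) (lam : ℝ) (hlam : lam ∈ Set.Ioo (0 : ℝ) 1)
    (h1 : H1 p S) (h2 : H2 p δ₀) (h3 : H3 p δ₀ K) (h4 : H4 p m lam)
    (z : Word) (q C : ℝ) (hq : q ∈ Set.Ioo (0 : ℝ) 1) (hC : 0 < C)
    (b : Word → Word → ℝ) (hb : Perturb p b z q C)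
    (s : Word) (hs : s ∈ Delta z) :
    (∀ t ∈ Delta z, greenAbs (Delta z) b s t < ⊤) ∧
    (∀ t : Word, 0 < greenE Set.univ p [] t ∧ greenE Set.univ p [] t < ⊤) ∧
    (∀ ω : ℕ → Bool, endWord ω z.length = z →
      ∃ L : ℝ, ∀ ε > (0 : ℝ), ∃ k, z.length ≤ k ∧
        ∀ t ∈ Delta (endWord ω k),
          |greenR (Delta z) b s t / (greenE Set.univ p [] t).toReal - L| < ε) := by
  obtain ⟨R, η, Λ, W⟩ := exists_uniformWalk hp hδ₀ hlam h1 h3 h4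
  refine ⟨fun t _ => ?_, fun t => ?_, fun ω _ => ?_⟩
  · exact (greenE_mono (fun u hu v hv => (hb u v hu hv).1) s t).trans_lt
      (W.greenE_ne_top s t).lt_top
  · exact ⟨W.ofReal_green [] t ▸ ENNReal.ofReal_pos.2 (W.green_pos [] t),
      (W.greenE_ne_top [] t).lt_top⟩
  · obtain ⟨C', hC', hrel⟩ := hb.exists_abs_zeroExtend_sub_le hp h1 hδ₀.1 h2 hq hC.le
    have hrel_support (u : Word) (hu : greenR Set.univ (zeroExtend (Delta z) b) s u ≠ 0) :=
      hrel u (by_contra fun hmem => hu (greenR_zeroExtend_of_notMem b hs hmem))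
    obtain ⟨L, hL⟩ := W.exists_tendsto_greenR_div_green (hb.abs_zeroExtend_le hp) hq hC'
      hrel_support ω
    refine ⟨L, fun ε hε => ?_⟩
    obtain ⟨k, -, hk⟩ := (hasBasis_endFilter ω).eventually_iff.1 (Metric.tendsto_nhds.1 hL ε hε)
    refine ⟨max k z.length, le_max_right _ _, fun t ht => ?_⟩
    rw [greenR_eq_greenR_zeroExtend b hs]
    exact hk (antitone_Delta_endWord ω (le_max_left k z.length) ht)

/-- Proposition 3.4: for a substochastic kernel `p` satisfying (H1)–(H4) and a
`q`-perturbation `b` of `p` on `Δ_z`, the Green series of `b` converges absolutely,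
`G_p(e,t) ∈ (0,∞)`, and the Martin-type kernel `G_b(s,·)/G_p(e,·)` converges to a finite
limit along every end of the tree lying in the closure of `Δ_z`. -/
theorem prop_3_4 (p : Word → Word → ℝ) (hp : ∀ s t, 0 ≤ p s t) (hsub : Substochastic p)
    (S : ℕ) (δ₀ : ℝ) (hδ₀ : δ₀ ∈ Set.Ioo (0 : ℝ) 1) (K : ℕ)
    (m : Word → ℝ) (lam : ℝ) (hlam : lam ∈ Set.Ioo (0 : ℝ) 1)
    (h1 : H1 p S) (h2 : H2 p δ₀) (h3 : H3 p δ₀ K) (h4 : H4 p m lam)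
    (z : Word) (q C : ℝ) (hq : q ∈ Set.Ioo (0 : ℝ) 1) (hC : 0 < C)
    (b : Word → Word → ℝ) (hb : Perturb p b z q C)
    (s : Word) (hs : s ∈ Delta z) :
    (∀ t ∈ Delta z, greenAbs (Delta z) b s t < ⊤) ∧
    (∀ t : Word, 0 < greenE Set.univ p [] t ∧ greenE Set.univ p [] t < ⊤) ∧
    (∀ ω : ℕ → Bool, endWord ω z.length = z →
      ∃ L : ℝ, ∀ ε > (0 : ℝ), ∃ k, z.length ≤ k ∧
        ∀ t ∈ Delta (endWord ω k),
          |greenR (Delta z) b s t / (greenE Set.univ p [] t).toReal - L| < ε) := by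
  exact prop_3_4_general p hp S δ₀ hδ₀ K m lam hlam h1 h2 h3 h4 z q C hq hC b hb s hs

end Paper
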